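/- arXiv:2505.21989 — 5 statements merged into one kernel-verified Lean document; each statement's English description precedes it below -/
import Mathlib

section
/- For all integers n ≥ 1, the number of (4,9)-regular overpartitions satisfies R̄_{4,9}(4n) ≡ 0 (mod 12). -/
/-- Number of partitions of `a` with no part divisible by `ℓ` or `μ`
(the non-overlined parts of an `(ℓ,μ)`-regular overpartition). -/
def regularCount (ℓ μ a : ℕ) : ℕ :=
  Fintype.card {p : a.Partition // ∀ i ∈ p.parts, ¬ ℓ ∣ i ∧ ¬ μ ∣ i}

/-- Number of partitions of `a` into distinct parts with no part divisible by `ℓ` or `μ`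
(the overlined parts of an `(ℓ,μ)`-regular overpartition). -/
def regularDistinctCount (ℓ μ a : ℕ) : ℕ :=
  Fintype.card {p : a.Partition // p.parts.Nodup ∧ ∀ i ∈ p.parts, ¬ ℓ ∣ i ∧ ¬ μ ∣ i}

/-- `Rbar ℓ μ n` is the number of `(ℓ,μ)`-regular overpartitions of `n`: pairs `(λ, δ)`
where `λ` is a partition, `δ` is a partition into distinct parts, `|λ| + |δ| = n`,
and no part of `λ` or `δ` is divisible by `ℓ` or by `μ`. -/
def Rbar (ℓ μ n : ℕ) : ℕ :=
  ∑ ab ∈ Finset.HasAntidiagonal.antidiagonal n, regularCount ℓ μ ab.1 * regularDistinctCount ℓ μ ab.2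

open PowerSeries PowerSeries.WithPiTopology

theorem gauss_fin {R : Type*} [CommRing R] (q : R) (n : ℕ) :
    (∏ j ∈ Finset.range n, (1 + q ^ (j+1))) * (1 + 2 * ∑ s ∈ Finset.range n, (-1) ^ (s+1) * q ^ ((s+1)^2))
    = ∏ j ∈ Finset.range n, (1 - q ^ (j+1)) + 2 * ∑ s ∈ Finset.range n,
      (-1)^(s+1) * (∏ j ∈ Finset.Ico (s+1) n, (1 - q^(j+1))) * (∏ j ∈ Finset.range s, (1 + q^(j+1))) * q ^ ((s+1)*(n+1)) := by
  induction n with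
  | zero => simp
  | succ n ih =>
    set A := ∏ j ∈ Finset.range n, (1 - q ^ (j+1)) with hA
    set B := ∏ j ∈ Finset.range n, (1 + q ^ (j+1)) with hB
    set t : ℕ → R := fun s => (-1)^(s+1) * (∏ j ∈ Finset.Ico (s+1) n, (1 - q^(j+1))) * (∏ j ∈ Finset.range s, (1 + q^(j+1))) * q ^ ((s+1)*(n+1)) with ht
    set g : ℕ → R := fun s => (-1)^(s+1) * (∏ j ∈ Finset.Ico s n, (1 - q^(j+1))) * (∏ j ∈ Finset.range s, (1 + q^(j+1))) * q ^ ((s+1)*(n+1)) with hg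
    have h1 : ∀ s ∈ Finset.range n, (-1)^(s+1) * (∏ j ∈ Finset.Ico (s+1) (n+1), (1 - q^(j+1))) * (∏ j ∈ Finset.range s, (1 + q^(j+1))) * q ^ ((s+1)*(n+1+1)) = (1 + q^(n+1)) * t s + (g (s+1) - g s) := by
      intro s hs
      have hs' := Finset.mem_range.mp hs
      simp only [ht, hg]
      rw [Finset.prod_Ico_succ_top (by omega), Finset.prod_eq_prod_Ico_succ_bot (a := s) (by omega), Finset.prod_range_succ]
      ring
    rw [Finset.sum_range_succ, Finset.sum_range_succ _ n, Finset.sum_congr rfl h1, Finset.sum_add_distrib, Finset.sum_range_sub g,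
      ← Finset.mul_sum, Finset.prod_range_succ, Finset.prod_range_succ]
    have g0 : g 0 = - A * q^(n+1) := by
      simp [hg, hA]
    have gn : g n = (-1)^(n+1) * B * q^((n+1)*(n+1)) := by
      simp [hg, hB]
    rw [g0, gn, ← hA, ← hB]
    simp only [Finset.Ico_self, Finset.prod_empty]
    linear_combination (1 + q^(n+1)) * ih

/-- coefficients -/
noncomputable def thS : ℤ⟦X⟧ := PowerSeries.mk fun d => if IsSquare d ∧ d ≠ 0 then (-1)^d else 0
noncomputable def thT : ℤ⟦X⟧ := 1 + 2 * thS
noncomputable def thN (n : ℕ) : ℤ⟦X⟧ := 1 + 2 * ∑ s ∈ Finset.range n, (-1) ^ (s+1) * X ^ ((s+1)^2)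

theorem thN_tendsto : Filter.Tendsto thN Filter.atTop (nhds thT) := by
  apply Filter.Tendsto.const_add
  apply Filter.Tendsto.const_mul
  rw [tendsto_iff_coeff_tendsto]
  intro d
  apply tendsto_atTop_of_eventually_const (i₀ := d)
  intro n hn
  have : ∀ s : ℕ, coeff d (((-1) ^ (s+1) * X ^ ((s+1)^2)) : ℤ⟦X⟧) = if d = (s+1)^2 then (-1)^d else 0 := by
    intro s
    have e : ((-1) ^ (s+1) * X ^ ((s+1)^2) : ℤ⟦X⟧) = C ((-1)^(s+1)) * X ^ ((s+1)^2) := by simp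
    rw [e, coeff_C_mul_X_pow]
    split_ifs with h
    · rw [h, sq, pow_mul]
      rcases Nat.even_or_odd (s+1) with h' | h'
      · simp [h'.neg_one_pow]
      · simp [h'.neg_one_pow]
    · rfl
  rw [map_sum, Finset.sum_congr rfl (fun s _ => this s), thS, coeff_mk]
  split_ifs with h
  · obtain ⟨⟨r, hr⟩, h0⟩ := h
    have hr0 : r ≠ 0 := by rintro rfl; simp at hr; exact h0 hr
    obtain ⟨s, rfl⟩ := Nat.exists_eq_succ_of_ne_zero hr0
    rw [Finset.sum_eq_single s]
    · rw [if_pos (by rw [hr, sq])]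
    · intro b _ hb
      rw [if_neg]
      intro h
      rw [hr, ← sq] at h
      have := Nat.pow_left_injective (n := 2) (by norm_num) h
      simp at this; omega
    · intro h; exfalso; apply h; simp; nlinarith
  · apply Finset.sum_eq_zero
    intro s _
    rw [if_neg]
    rintro rfl
    apply h
    exact ⟨⟨s+1, by ring⟩, by positivity⟩

theorem mult_sub : Multipliable fun n ↦ (1 : ℤ⟦X⟧) - X ^ (n + 1) := by
  exact PowerSeries.WithPiTopology.multipliable_one_sub_X_pow ℤ
theorem mult_add : Multipliable fun n ↦ (1 : ℤ⟦X⟧) + X ^ (n + 1) := by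
  have := Nat.Partition.multipliable_powerSeriesMk_card_countRestricted ℤ 2
  simpa [Finset.sum_range_succ] using this

noncomputable def eM : ℤ⟦X⟧ := ∏' n : ℕ, ((1 : ℤ⟦X⟧) - X ^ (n + 1))
noncomputable def eP : ℤ⟦X⟧ := ∏' n : ℕ, ((1 : ℤ⟦X⟧) + X ^ (n + 1))
theorem hM : HasProd (fun n ↦ (1 : ℤ⟦X⟧) - X ^ (n + 1)) eM := mult_sub.hasProd
theorem hP : HasProd (fun n ↦ (1 : ℤ⟦X⟧) + X ^ (n + 1)) eP := mult_add.hasProd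

theorem gauss : eP * thT = eM := by
  have h1 := hP.tendsto_prod_nat.mul thN_tendsto
  have h2 := hM.tendsto_prod_nat
  have h3 : Filter.Tendsto (fun n => (∏ j ∈ Finset.range n, ((1 : ℤ⟦X⟧) + X ^ (j+1))) * thN n - ∏ j ∈ Finset.range n, ((1 : ℤ⟦X⟧) - X ^ (j+1))) Filter.atTop (nhds 0) := by
    rw [tendsto_iff_coeff_tendsto]
    intro d
    apply tendsto_atTop_of_eventually_const (i₀ := d)
    intro n hn
    rw [thN, gauss_fin, add_sub_cancel_left, map_zero]
    have : (X : ℤ⟦X⟧)^(n+1) ∣ 2 * ∑ s ∈ Finset.range n,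
      (-1)^(s+1) * (∏ j ∈ Finset.Ico (s+1) n, (1 - X^(j+1))) * (∏ j ∈ Finset.range s, (1 + X^(j+1))) * X ^ ((s+1)*(n+1)) := by
      apply Dvd.dvd.mul_left
      apply Finset.dvd_sum
      intro s _
      apply Dvd.dvd.mul_left
      apply pow_dvd_pow
      nlinarith
    exact X_pow_dvd_iff.mp this d (by omega)
  have h4 := tendsto_nhds_unique h3 (h1.sub h2)
  exact (sub_eq_zero.mp h4.symm)

theorem cont_expand (k : ℕ) (hk : k ≠ 0) : Continuous (expand k hk : ℤ⟦X⟧ → ℤ⟦X⟧) := by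
  rw [continuous_iff_continuousAt]
  intro f
  rw [ContinuousAt, tendsto_iff_coeff_tendsto]
  intro d
  simp only [coeff_expand]
  split_ifs
  · exact (continuous_coeff ℤ (d/k)).continuousAt
  · exact tendsto_const_nhds

theorem indic_prod (k : ℕ) (hk : k ≠ 0) (ε : ℤ) (e : ℤ⟦X⟧)
    (he : HasProd (fun n ↦ (1 : ℤ⟦X⟧) + C ε * X ^ (n + 1)) e) :
    HasProd (fun n ↦ if k ∣ n + 1 then (1 : ℤ⟦X⟧) + C ε * X ^ (n + 1) else 1) (expand k hk e) := by
  have h1 := he.map (expand k hk : ℤ⟦X⟧ →ₐ[ℤ] ℤ⟦X⟧) (cont_expand k hk)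
  have hinj : Function.Injective (fun n : ℕ => k * (n+1) - 1) := by
    intro a b h
    have ha : 0 < k * (a+1) := by positivity
    have hb : 0 < k * (b+1) := by positivity
    have : k * (a+1) = k * (b+1) := by simp only at h; omega
    have := Nat.eq_of_mul_eq_mul_left (by omega) this
    omega
  rw [← hinj.hasProd_iff]
  · convert! h1 using 1
    funext n
    have ha : 0 < k * (n+1) := by positivity
    simp only [Function.comp]
    rw [Nat.sub_add_cancel (by omega), if_pos (by simp)]
    simp [expand_X, pow_mul]
  · intro x hx
    rw [if_neg]
    rintro ⟨c, hc⟩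
    apply hx
    have : c ≠ 0 := by rintro rfl; simp at hc
    obtain ⟨s, rfl⟩ := Nat.exists_eq_succ_of_ne_zero this
    exact ⟨s, by simp only [Nat.succ_eq_add_one] at hc ⊢; omega⟩

abbrev okp (i : ℕ) : Prop := ¬ 4 ∣ i ∧ ¬ 9 ∣ i

noncomputable def gR : ℤ⟦X⟧ := PowerSeries.mk fun n => (regularCount 4 9 n : ℤ)
noncomputable def gD : ℤ⟦X⟧ := PowerSeries.mk fun n => (regularDistinctCount 4 9 n : ℤ)
noncomputable def gF : ℤ⟦X⟧ := PowerSeries.mk fun n => (Rbar 4 9 n : ℤ)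

theorem gF_eq : gF = gR * gD := by
  ext n
  rw [coeff_mul]
  simp [gF, gR, gD, Rbar]

theorem hgR : HasProd (fun i ↦ if okp (i + 1) then ∑' j : ℕ, (X : ℤ⟦X⟧) ^ ((i + 1) * j) else 1) gR := by
  have h := Nat.Partition.hasProd_powerSeriesMk_card_restricted ℤ okp
  convert! h using 1
  ext n
  simp only [gR, coeff_mk, regularCount, Nat.Partition.restricted]
  rw [Fintype.card_subtype]

theorem hgD : HasProd (fun i ↦ if okp (i + 1) then (1 : ℤ⟦X⟧) + X ^ (i + 1) else 1) gD := by
  have h := Nat.Partition.hasProd_genFun (R := ℤ) (fun i c => if okp i ∧ c ≤ 1 then 1 else 0)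
  convert! h using 1
  · funext i
    rw [tsum_eq_single 0]
    · by_cases hi : okp (i+1)
      · rw [if_pos hi, if_pos ⟨hi, by omega⟩, zero_add, mul_one]; exact congrArg (1 + ·) (one_smul ℤ _).symm
      · rw [if_neg hi, if_neg (fun h => hi h.1)]; exact ((congrArg (1 + ·) (zero_smul ℤ _)).trans (add_zero _)).symm
    · intro b hb
      rw [if_neg (by omega)]; exact zero_smul ℤ _
  · ext n
    simp only [gD, coeff_mk, regularDistinctCount, Nat.Partition.coeff_genFun]
    rw [Fintype.card_subtype, Finset.card_filter]
    push_cast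
    apply Finset.sum_congr rfl
    intro p _
    simp only [Finsupp.prod, Finset.prod_boole]
    congr 1
    simp only [eq_iff_iff, Multiset.toFinsupp_support, Multiset.mem_toFinset, Multiset.toFinsupp_apply, Multiset.nodup_iff_count_le_one]
    constructor
    · rintro ⟨h1, h2⟩ i hi
      exact ⟨h2 i hi, h1 i⟩
    · intro h
      refine ⟨fun i => ?_, fun i hi => (h i hi).1⟩
      by_cases hi : i ∈ p.parts
      · exact (h i hi).2
      · simp [Multiset.count_eq_zero_of_notMem hi]

theorem hgR' : ∀ i, (if okp (i + 1) then ∑' j : ℕ, (X : ℤ⟦X⟧) ^ ((i + 1) * j) else 1) *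
    (if okp (i + 1) then (1 : ℤ⟦X⟧) - X ^ (i + 1) else 1) = 1 := by
  intro i
  split_ifs
  · simp_rw [pow_mul]
    exact tsum_pow_mul_one_sub_of_constantCoeff_eq_zero (by simp)
  · simp

noncomputable abbrev ex (k : ℕ) (hk : k ≠ 0) (f : ℤ⟦X⟧) : ℤ⟦X⟧ := expand k hk f

theorem indicM (k : ℕ) (hk : k ≠ 0) :
    HasProd (fun n ↦ if k ∣ n + 1 then (1 : ℤ⟦X⟧) - X ^ (n + 1) else 1) (ex k hk eM) := by
  have := indic_prod k hk (-1) eM (by simpa [sub_eq_add_neg] using hM)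
  simpa [sub_eq_add_neg] using this
theorem indicP (k : ℕ) (hk : k ≠ 0) :
    HasProd (fun n ↦ if k ∣ n + 1 then (1 : ℤ⟦X⟧) + X ^ (n + 1) else 1) (ex k hk eP) := by
  have := indic_prod k hk 1 eP (by simpa using hP)
  simpa using this

theorem pw (f : ℕ → ℤ⟦X⟧) (i : ℕ) :
    (if okp (i + 1) then f i else 1) * ((if 4 ∣ i + 1 then f i else 1) * (if 9 ∣ i + 1 then f i else 1))
      = f i * (if 36 ∣ i+1 then f i else 1) := by
  by_cases h4 : 4 ∣ i + 1 <;> by_cases h9 : 9 ∣ i + 1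
  · have : 36 ∣ i+1 := by omega
    simp [okp, h4, h9, this]
  all_goals
    have : ¬ 36 ∣ i+1 := by omega
    simp [okp, h4, h9, this]

theorem relD : gD * (ex 4 (by norm_num) eP * ex 9 (by norm_num) eP) = eP * ex 36 (by norm_num) eP := by
  have h1 := hgD.mul ((indicP 4 (by norm_num)).mul (indicP 9 (by norm_num)))
  have h2 := hP.mul (indicP 36 (by norm_num))
  refine h1.unique ?_
  convert! h2 using 1
  funext i
  exact pw (fun i => 1 + X^(i+1)) i

theorem relR : gR * (eM * ex 36 (by norm_num) eM) = ex 4 (by norm_num) eM * ex 9 (by norm_num) eM := by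
  have h1 := hgR.mul (hM.mul (indicM 36 (by norm_num)))
  have h2 := (indicM 4 (by norm_num)).mul (indicM 9 (by norm_num))
  refine h1.unique ?_
  convert! h2 using 1
  funext i
  rw [← pw (fun i => 1 - X^(i+1)) i, ← mul_assoc, hgR', one_mul]

theorem gauss_ex (k : ℕ) (hk : k ≠ 0) : ex k hk eP * ex k hk thT = ex k hk eM := by
  rw [← gauss, ex, ex, ex, map_mul]

theorem eP_ne : eP ≠ 0 := by
  intro h
  have h1 := gauss
  rw [h, zero_mul] at h1
  exact tprod_one_sub_X_pow_ne_zero ℤ h1.symm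

theorem ex_ne (k : ℕ) (hk : k ≠ 0) (f : ℤ⟦X⟧) (hf : f ≠ 0) : ex k hk f ≠ 0 := by
  intro h
  apply hf
  ext n
  rw [← coeff_expand_mul k hk, ← ex, h]; simp

theorem relF : gF * (thT * ex 36 (by norm_num) thT) = ex 4 (by norm_num) thT * ex 9 (by norm_num) thT := by
  have hR := relR
  have hD := relD
  rw [← gauss_ex 4, ← gauss_ex 9, ← gauss_ex 36, ← gauss] at hR
  have h0 : eP * ex 36 (by norm_num) eP * (ex 4 (by norm_num) eP * ex 9 (by norm_num) eP) ≠ 0 := by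
    refine mul_ne_zero (mul_ne_zero eP_ne (ex_ne _ _ _ eP_ne)) (mul_ne_zero (ex_ne _ _ _ eP_ne) (ex_ne _ _ _ eP_ne))
  apply mul_left_cancel₀ h0
  rw [gF_eq]
  linear_combination gD * ((ex 4 (by norm_num) eP * ex 9 (by norm_num) eP)) * hR + ex 4 (by norm_num) eP * ex 9 (by norm_num) eP * ex 4 (by norm_num) thT * ex 9 (by norm_num) thT * hD

theorem ex_thT (k : ℕ) (hk : k ≠ 0) : ex k hk thT = 1 + 2 * ex k hk thS := by
  rw [ex, thT, map_add, map_one, two_mul, two_mul, map_add]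

theorem mod_four (n : ℕ) (hn : 1 ≤ n) : (4 : ℤ) ∣ (Rbar 4 9 (4 * n) : ℤ) := by
  have h := relF
  set a := thS with ha
  set b := ex 4 (by norm_num) thS with hb
  set c := ex 9 (by norm_num) thS with hc
  set d := ex 36 (by norm_num) thS with hd
  have e4 : ex 4 (by norm_num) thT = 1 + 2 * b := ex_thT _ _
  have e9 : ex 9 (by norm_num) thT = 1 + 2 * c := ex_thT _ _
  have e36 : ex 36 (by norm_num) thT = 1 + 2 * d := ex_thT _ _
  rw [e4, e9, e36, thT, ← ha] at h
  have key : ∃ Y, gF = 1 + 2 * (a + b + c + d) + 4 * Y := by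
    refine ⟨-(a^2 + a) * gF * (1 + 2*d)^2  -(d^2+d) * gF + (b*c) + (a+d+2*a*d)*(b+c+2*b*c) + a * d, ?_⟩
    linear_combination (1+2*a) * (1+2*d) * h
  obtain ⟨Y, hY⟩ := key
  have h1 := congrArg (coeff (4*n)) hY
  have two : ∀ f : ℤ⟦X⟧, coeff (4*n) (2 * f) = 2 * coeff (4*n) f := by
    intro f; rw [two_mul, map_add, two_mul]
  have four : ∀ f : ℤ⟦X⟧, coeff (4*n) (4 * f) = 4 * coeff (4*n) f := by
    intro f
    rw [show (4 : ℤ⟦X⟧) = C 4 by rfl, coeff_C_mul]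
  rw [gF, coeff_mk, map_add, map_add, four, two, coeff_one, if_neg (by omega)] at h1
  rw [h1, zero_add]
  apply dvd_add _ (dvd_mul_right _ _)
  rw [show (4 : ℤ) = 2 * 2 by norm_num]
  apply mul_dvd_mul_left
  have sq4 : ∀ m : ℕ, IsSquare (4 * m) ↔ IsSquare m := by
    intro m
    constructor
    · rintro ⟨r, hr⟩
      have : 2 ∣ r := by
        have : 2 ∣ r * r := ⟨2 * m, by omega⟩
        rcases (Nat.prime_two.dvd_mul).mp this with h | h <;> exact h
      obtain ⟨s, rfl⟩ := this
      exact ⟨s, by nlinarith⟩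
    · rintro ⟨r, rfl⟩
      exact ⟨2 * r, by ring⟩
  have par : ∀ m : ℕ, m ≠ 0 → (2 : ℤ) ∣ coeff (4 * m) thS + coeff m thS := by
    intro m hm
    simp only [thS, coeff_mk, sq4]
    by_cases hs : IsSquare m
    · rcases Nat.even_or_odd m with h' | h'
      · simp [hs, hm, h'.neg_one_pow, pow_mul]
      · simp [hs, hm, h'.neg_one_pow, pow_mul]
    · simp [hs]
  rw [map_add, map_add, map_add, ha, hb, hc, hd, ex, ex, ex, coeff_expand_mul, add_assoc]
  apply dvd_add (par n (by omega))
  by_cases h9 : 9 ∣ n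
  · obtain ⟨m, rfl⟩ := h9
    rw [show 4 * (9 * m) = 36 * m by ring, coeff_expand_mul, show 36 * m = 9 * (4 * m) by ring, coeff_expand_mul]
    exact par m (by omega)
  · rw [coeff_expand_of_not_dvd _ _ _ (by omega), coeff_expand_of_not_dvd _ _ _ (by omega)]
    simp

/-! counting -/

theorem card_mod3 {α : Type*} (s : Set α) (hs : s.Finite) (f : α → α) (hf : ∀ x ∈ s, f x ∈ s)
    (h3 : ∀ x ∈ s, f (f (f x)) = x) : s.ncard ≡ {x ∈ s | f x = x}.ncard [MOD 3] := by
  classical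
  have : Fintype s := hs.fintype
  have : Fact (Nat.Prime 3) := ⟨Nat.prime_three⟩
  let g : Function.End s := fun x => ⟨f x, hf x x.2⟩
  have hg : g ^ 3 ^ 1 = 1 := by
    funext x
    apply Subtype.ext
    exact h3 x x.2
  have h := Equiv.Perm.card_fixedPoints_modEq hg
  have e1 : Fintype.card s = s.ncard := by rw [Set.ncard_eq_toFinset_card', Set.toFinset_card]
  have e2 : Fintype.card (Function.fixedPoints g) = {x ∈ s | f x = x}.ncard := by
    rw [← Nat.card_eq_fintype_card, ← Nat.card_coe_set_eq]
    apply Nat.card_congr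
    refine ⟨fun x => ⟨x.1.1, x.1.2, congrArg Subtype.val x.2⟩, fun x => ⟨⟨x.1, x.2.1⟩, Subtype.ext x.2.2⟩, ?_, ?_⟩
    · intro x; rfl
    · intro x; rfl
  rw [← e1, ← e2]
  exact h

abbrev Q4 := (ℤ × ℤ) × (ℤ × ℤ)

def nE (v : ℤ × ℤ) : ℤ := v.1^2 - v.1 * v.2 + v.2^2
def rot (v : ℤ × ℤ) : ℤ × ℤ := (-v.2, v.1 - v.2)

theorem nE_rot (v) : nE (rot v) = nE v := by simp only [nE, rot]; ring
theorem rot3 (v) : rot (rot (rot v)) = v := by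
  obtain ⟨a, b⟩ := v
  simp only [rot, Prod.mk.injEq]; constructor <;> ring
theorem rot_fix (v) : rot v = v ↔ v = 0 := by
  obtain ⟨a, b⟩ := v
  simp only [rot, Prod.mk.injEq, Prod.mk_eq_zero]; omega
theorem nE_nonneg (v) : 0 ≤ nE v := by
  simp only [nE]; nlinarith [sq_nonneg (v.1 - v.2), sq_nonneg v.1, sq_nonneg v.2]
theorem nE_zero : nE 0 = 0 := by simp [nE]

/-- solutions -/
def W (n : ℤ) : Set Q4 := {v | nE v.1 + nE v.2 = n}
def RQ (n : ℤ) : Set Q4 := {v | v.1.1^2 + 3 * v.1.2^2 + (v.2.1^2 + 3 * v.2.2^2) = n}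
def W1 (n : ℤ) : Set (ℤ × ℤ) := {v | nE v = n ∧ Even v.2}

theorem nE_bd (v : ℤ × ℤ) (n : ℤ) (h : nE v ≤ n) : v ∈ Set.Icc (-(2*n)) (2*n) ×ˢ Set.Icc (-(2*n)) (2*n) := by
  obtain ⟨a, b⟩ := v
  simp only [nE] at h
  have ha : a^2 ≤ 2 * n := by nlinarith [sq_nonneg (a - b), sq_nonneg (a-2*b), sq_nonneg b]
  have hb : b^2 ≤ 2 * n := by nlinarith [sq_nonneg (a - b), sq_nonneg (2*a-b), sq_nonneg a]
  simp only [Set.mem_prod, Set.mem_Icc]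
  refine ⟨⟨?_, ?_⟩, ?_, ?_⟩
  · nlinarith [Int.le_self_sq (-a)]
  · nlinarith [Int.le_self_sq a]
  · nlinarith [Int.le_self_sq (-b)]
  · nlinarith [Int.le_self_sq b]

theorem W1_fin (n) : (W1 n).Finite := by
  have hb := (Set.finite_Icc (-(2*n)) (2*n)).prod (Set.finite_Icc (-(2*n)) (2*n))
  refine Set.Finite.subset hb ?_
  intro v hv
  exact nE_bd v n hv.1.le

theorem W_fin (n) : (W n).Finite := by
  have hb := (Set.finite_Icc (-(2*n)) (2*n)).prod (Set.finite_Icc (-(2*n)) (2*n))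
  refine Set.Finite.subset (hb.prod hb) ?_
  intro v hv
  have hv' : nE v.1 + nE v.2 = n := hv
  exact ⟨nE_bd v.1 n (by linarith [nE_nonneg v.2]), nE_bd v.2 n (by linarith [nE_nonneg v.1])⟩

theorem sub_fin (n : ℤ) (p : Q4 → Prop) : {v ∈ W n | p v}.Finite := (W_fin n).subset (Set.sep_subset _ _)

/-- RQ n counts W n with both even -/
theorem RQ_eq (n : ℤ) : (RQ n).ncard = {v ∈ W n | Even v.1.2 ∧ Even v.2.2}.ncard := by
  symm
  have : {v ∈ W n | Even v.1.2 ∧ Even v.2.2} = (fun v : Q4 => (((v.1.1 + v.1.2, 2 * v.1.2), (v.2.1 + v.2.2, 2 * v.2.2)) : Q4)) '' RQ n := by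
    ext ⟨⟨a, b⟩, ⟨c, d⟩⟩
    simp only [W, RQ, nE, Set.mem_ofPred_eq, Set.mem_image, Prod.mk.injEq, Prod.exists]
    constructor
    · rintro ⟨h, ⟨r, rfl⟩, ⟨s, rfl⟩⟩
      refine ⟨a - r, r, c - s, s, ?_, ?_⟩
      · linear_combination h
      · refine ⟨⟨by ring, by ring⟩, by ring, by ring⟩
    · rintro ⟨x, z, y, w, h, ⟨rfl, rfl⟩, rfl, rfl⟩
      refine ⟨by linear_combination h, by simp, by simp⟩
  rw [this]
  apply Set.ncard_image_of_injective
  rintro ⟨⟨a, b⟩, ⟨c, d⟩⟩ ⟨⟨a', b'⟩, ⟨c', d'⟩⟩ h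
  simp only [Prod.mk.injEq] at h ⊢
  omega

theorem RQ_fin (n) : (RQ n).Finite := by
  have h : Set.InjOn (fun v : Q4 => (((v.1.1 + v.1.2, 2 * v.1.2), (v.2.1 + v.2.2, 2 * v.2.2)) : Q4)) (RQ n) := by
    rintro ⟨⟨a, b⟩, ⟨c, d⟩⟩ _ ⟨⟨a', b'⟩, ⟨c', d'⟩⟩ _ h
    simp only [Prod.mk.injEq] at h ⊢
    omega
  refine Set.Finite.of_injOn (t := W n) ?_ h (W_fin n)
  rintro ⟨⟨a, b⟩, ⟨c, d⟩⟩ h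
  simp only [W, RQ, nE, Set.mem_ofPred_eq] at h ⊢
  linear_combination h

theorem RQ4_eq (n : ℤ) : (RQ (4*n)).ncard = (W n).ncard + {v ∈ W n | Odd (v.1.2 + v.2.2)}.ncard := by
  let f1 : Q4 → Q4 := fun v => ((2 * v.1.1 - v.1.2, v.1.2), (2 * v.2.1 - v.2.2, v.2.2))
  let f2 : Q4 → Q4 := fun v => ((2 * v.1.1 - v.1.2, v.2.2), (2 * v.2.1 - v.2.2, v.1.2))
  have i1 : Function.Injective f1 := by
    rintro ⟨⟨a, b⟩, ⟨c, d⟩⟩ ⟨⟨a', b'⟩, ⟨c', d'⟩⟩ h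
    simp only [f1, Prod.mk.injEq] at h ⊢
    omega
  have i2 : Function.Injective f2 := by
    rintro ⟨⟨a, b⟩, ⟨c, d⟩⟩ ⟨⟨a', b'⟩, ⟨c', d'⟩⟩ h
    simp only [f2, Prod.mk.injEq] at h ⊢
    omega
  rw [← Set.ncard_image_of_injective (W n) i1, ← Set.ncard_image_of_injective {v ∈ W n | Odd (v.1.2 + v.2.2)} i2,
    ← Set.ncard_union_eq ?_ ((W_fin n).image _) ((sub_fin n _).image _)]
  · congr 1
    ext ⟨⟨x, z⟩, ⟨y, w⟩⟩
    simp only [W, RQ, nE, f1, f2, Set.mem_ofPred_eq, Set.mem_image, Prod.mk.injEq, Prod.exists, Set.mem_union]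
    constructor
    · intro h
      by_cases hxz : (x - z) % 2 = 0
      · left
        have hyw : (y - w) % 2 = 0 := by
          obtain ⟨r, hr⟩ : ∃ r, x = z + 2 * r := ⟨(x - z)/2, by omega⟩
          by_contra hc
          obtain ⟨s, hs⟩ : ∃ s, y = w + 2 * s + 1 := ⟨(y - w - 1)/2, by omega⟩
          subst hr hs
          ring_nf at h
          omega
        refine ⟨(x+z)/2, z, (y+w)/2, w, ?_, ⟨by omega, rfl⟩, by omega, rfl⟩
        obtain ⟨r, hr⟩ : ∃ r, x = 2 * r - z := ⟨(x + z)/2, by omega⟩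
        obtain ⟨s, hs⟩ : ∃ s, y = 2 * s - w := ⟨(y + w)/2, by omega⟩
        subst hr hs
        rw [show (2 * r - z + z)/2 = r by omega, show (2 * s - w + w)/2 = s by omega]
        linarith
      · right
        obtain ⟨r, hr⟩ : ∃ r, x = z + 2 * r + 1 := ⟨(x - z - 1)/2, by omega⟩
        have hyw : (y - w) % 2 ≠ 0 := by
          intro hc
          obtain ⟨s, hs⟩ : ∃ s, y = w + 2 * s := ⟨(y - w)/2, by omega⟩
          subst hr hs
          ring_nf at h
          omega
        obtain ⟨s, hs⟩ : ∃ s, y = w + 2 * s + 1 := ⟨(y - w - 1)/2, by omega⟩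
        have hzw : (z + w) % 2 = 1 := by
          by_contra hc
          obtain ⟨t, ht⟩ : ∃ t, w = z + 2 * t := ⟨(w - z)/2, by omega⟩
          subst hr hs ht
          have hz : (z * z + z) % 2 = 0 := by
            rcases Int.even_or_odd' z with ⟨u, rfl | rfl⟩ <;> ring_nf <;> omega
          ring_nf at h hz
          omega
        refine ⟨(x+w)/2, w, (y+z)/2, z, ⟨?_, by rw [Int.odd_iff]; omega⟩, ⟨by omega, rfl⟩, by omega, rfl⟩
        obtain ⟨p, hp⟩ : ∃ p, x = 2 * p - w := ⟨(x + w)/2, by omega⟩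
        obtain ⟨q, hq⟩ : ∃ q, y = 2 * q - z := ⟨(y + z)/2, by omega⟩
        rw [show (x + w)/2 = p by omega, show (y + z)/2 = q by omega]
        rw [hp, hq] at h
        linarith
    · rintro (⟨a, b, c, d, h, ⟨rfl, rfl⟩, rfl, rfl⟩ | ⟨a, b, c, d, ⟨h, _⟩, ⟨rfl, rfl⟩, rfl, rfl⟩)
      · linear_combination 4 * h
      · linear_combination 4 * h
  · rw [Set.disjoint_left]
    rintro ⟨⟨x, z⟩, ⟨y, w⟩⟩
    simp only [f1, f2, Set.mem_ofPred_eq, Set.mem_image, Prod.mk.injEq, Prod.exists]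
    rintro ⟨a, b, c, d, h, h1, h2⟩ ⟨a', b', c', d', ⟨h', h3⟩, h4, h5⟩
    rw [Int.odd_iff] at h3
    omega

theorem inj0 (n : ℤ) : {v ∈ W n | Even v.1.2 ∧ v.2 = 0}.ncard = (W1 n).ncard := by
  rw [← Set.ncard_image_of_injective (W1 n) (f := fun v => ((v, 0) : Q4)) (fun a b h => congrArg Prod.fst h)]
  congr 1
  ext ⟨v, w⟩
  simp only [W, W1, Set.mem_ofPred_eq, Set.mem_image, Prod.mk.injEq]
  constructor
  · rintro ⟨h, h1, rfl⟩
    exact ⟨v, ⟨by simpa [nE_zero] using h, h1⟩, rfl, rfl⟩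
  · rintro ⟨v, ⟨h, h1⟩, rfl, rfl⟩
    exact ⟨by simpa [nE_zero] using h, h1, rfl⟩

theorem swapc (n : ℤ) (p : Q4 → Prop) : {v ∈ W n | p v}.ncard = {v ∈ W n | p v.swap}.ncard := by
  rw [← Set.ncard_image_of_injective {v ∈ W n | p v.swap} (f := Prod.swap) Prod.swap_injective]
  congr 1
  ext ⟨v, w⟩
  simp only [W, Set.mem_ofPred_eq, Set.mem_image]
  constructor
  · rintro ⟨h, h1⟩
    exact ⟨(w, v), ⟨by simp only; linarith, h1⟩, rfl⟩
  · rintro ⟨⟨a, b⟩, ⟨h, h1⟩, h2⟩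
    obtain ⟨rfl, rfl⟩ := Prod.mk.inj h2
    simp only at h
    exact ⟨by linarith, h1⟩

theorem W_split (n : ℤ) (p q : Q4 → Prop) : {v ∈ W n | p v}.ncard = {v ∈ W n | p v ∧ q v}.ncard + {v ∈ W n | p v ∧ ¬ q v}.ncard := by
  rw [← Set.ncard_union_eq ?_ (sub_fin n _) (sub_fin n _)]
  · congr 1
    ext v
    simp only [Set.mem_ofPred_eq, Set.mem_union]
    tauto
  · rw [Set.disjoint_left]
    intro v h1 h2
    exact h2.2.2 h1.2.2


theorem cW (n : ℤ) (hn : 1 ≤ n) : (W n).ncard ≡ 0 [MOD 3] := by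
  have h := card_mod3 (W n) (W_fin n) (fun v => (rot v.1, rot v.2))
    (fun v hv => by simpa [W, nE_rot] using hv) (fun v hv => by simp [rot3])
  have e : {x ∈ W n | (rot x.1, rot x.2) = x} = ∅ := by
    ext ⟨v, w⟩
    simp only [W, Set.mem_ofPred_eq, Prod.mk.injEq, rot_fix, Set.mem_empty_iff_false, iff_false]
    rintro ⟨h, rfl, rfl⟩
    simp [nE_zero] at h
    omega
  rw [e, Set.ncard_empty] at h
  exact h

theorem cE (n : ℤ) : {v ∈ W n | Even v.1.2}.ncard ≡ (W1 n).ncard [MOD 3] := by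
  have h := card_mod3 {v ∈ W n | Even v.1.2} (sub_fin n _) (fun v => (v.1, rot v.2))
    (fun v hv => by simpa [W, nE_rot] using hv) (fun v hv => by simp [rot3])
  rw [← inj0]
  convert h using 2
  ext ⟨v, w⟩
  simp only [W, Set.mem_ofPred_eq, Prod.mk.injEq, rot_fix]
  tauto

theorem nE_par (v : ℤ × ℤ) (h : Even v.2) : Even (nE v) ↔ Even v.1 := by
  simp [nE, h, parity_simps]

theorem cEven (n : ℤ) (hn : 1 ≤ n) (he : Even n) : (W1 n).ncard ≡ 0 [MOD 3] := by
  have h := card_mod3 (W1 n) (W1_fin n) rot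
    (fun v hv => by
      have h1 : Even v.1 := (nE_par v hv.2).mp (by rw [hv.1]; exact he)
      exact ⟨by rw [nE_rot]; exact hv.1, h1.sub hv.2⟩) (fun v hv => rot3 v)
  have e : {x ∈ W1 n | rot x = x} = ∅ := by
    ext v
    simp only [W1, Set.mem_ofPred_eq, rot_fix, Set.mem_empty_iff_false, iff_false]
    rintro ⟨⟨h, _⟩, rfl⟩
    simp [nE_zero] at h
    omega
  rw [e, Set.ncard_empty] at h
  exact h

theorem cOdd' (n : ℤ) : {v ∈ W n | (Even v.1.2 ∧ Even v.2.2) ∧ Even v.2.1}.ncard ≡ (W1 n).ncard [MOD 3] := by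
  have h := card_mod3 {v ∈ W n | (Even v.1.2 ∧ Even v.2.2) ∧ Even v.2.1} (sub_fin n _) (fun v => (v.1, rot v.2))
    (fun v hv => by
      obtain ⟨h1, ⟨h2, h3⟩, h4⟩ := hv
      exact ⟨by simpa [W, nE_rot] using h1, ⟨h2, h4.sub h3⟩, h3.neg⟩) (fun v hv => by simp [rot3])
  rw [← inj0]
  convert h using 2
  ext ⟨v, w⟩
  simp only [W, Set.mem_ofPred_eq, Prod.mk.injEq, rot_fix]
  constructor
  · rintro ⟨h, h1, rfl⟩
    simp [h, h1]
  · tauto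

theorem cOdd (n : ℤ) (he : Odd n) : {v ∈ W n | Even v.1.2 ∧ Even v.2.2}.ncard ≡ 2 * (W1 n).ncard [MOD 3] := by
  rw [W_split n _ (fun v => Even v.2.1), two_mul]
  apply Nat.ModEq.add (cOdd' n)
  have e : {v ∈ W n | (Even v.1.2 ∧ Even v.2.2) ∧ ¬ Even v.2.1} = {v ∈ W n | (Even v.1.2 ∧ Even v.2.2) ∧ Even v.1.1} := by
    ext v
    simp only [Set.mem_ofPred_eq, W]
    constructor
    · rintro ⟨h, ⟨h1, h2⟩, h3⟩
      refine ⟨h, ⟨h1, h2⟩, ?_⟩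
      rw [← nE_par _ h1]
      rw [← nE_par _ h2] at h3
      rw [← h, Int.odd_add'] at he
      exact he.mp (Int.not_even_iff_odd.mp h3)
    · rintro ⟨h, ⟨h1, h2⟩, h3⟩
      refine ⟨h, ⟨h1, h2⟩, ?_⟩
      rw [← nE_par _ h1] at h3
      rw [← nE_par _ h2]
      intro hc
      exact (Int.not_even_iff_odd.mpr he) (h ▸ h3.add hc)
  rw [e, swapc]
  have h := cOdd' n
  convert h using 5
  simp only [Prod.fst_swap, Prod.snd_swap]
  tauto

theorem RQ_main (n : ℤ) (hn : 1 ≤ n) :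
    ((RQ (4*n)).ncard : ℤ) ≡ (if Even n then 1 else -1) * (RQ n).ncard [ZMOD 3] := by
  have h1 := RQ4_eq n
  have h2 := RQ_eq n
  have h3 : {v ∈ W n | Odd (v.1.2 + v.2.2)}.ncard = {v ∈ W n | Even v.1.2 ∧ ¬ Even v.2.2}.ncard + {v ∈ W n | Even v.1.2 ∧ ¬ Even v.2.2}.ncard := by
    rw [W_split n _ (fun v => Even v.1.2)]
    congr 1
    · congr 1
      ext v
      simp only [Set.mem_ofPred_eq, Int.even_add, ← Int.not_even_iff_odd]
      tauto
    · rw [swapc n (fun v => Even v.1.2 ∧ ¬ Even v.2.2)]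
      congr 1
      ext v
      simp only [Set.mem_ofPred_eq, Int.even_add, ← Int.not_even_iff_odd, Prod.fst_swap, Prod.snd_swap]
      tauto
  have h4 := W_split n (fun v => Even v.1.2) (fun v => Even v.2.2)
  have h5 := cE n
  have h6 := cW n hn
  have h7 := cEven n hn
  have h8 := cOdd n
  rw [← h2] at h8 h4
  simp only [Nat.ModEq, Int.ModEq] at *
  split_ifs with he
  · have := h7 he
    omega
  · have := h8 (Int.not_even_iff_odd.mp he)
    omega

theorem thN_int (N : ℕ) : thN N = ∑ m ∈ Finset.Icc (-(N:ℤ)) N, C ((-1 : ℤ) ^ m.natAbs) * X ^ (m.natAbs ^ 2) := by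
  induction N with
  | zero => simp [thN]
  | succ N ih =>
    have e : Finset.Icc (-((N+1 : ℕ):ℤ)) ((N+1 : ℕ) : ℤ) = insert (-((N+1 : ℕ):ℤ)) (insert ((N+1 : ℕ):ℤ) (Finset.Icc (-(N:ℤ)) N)) := by
      ext m
      simp only [Finset.mem_insert, Finset.mem_Icc]
      omega
    rw [e, Finset.sum_insert, Finset.sum_insert, ← ih, thN, Finset.sum_range_succ, thN]
    · rw [Int.natAbs_neg, Int.natAbs_natCast]
      simp only [map_pow, map_neg, map_one]
      ring
    · simp
    · simp only [Finset.mem_insert, Finset.mem_Icc]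
      omega

theorem ex3_thN (N : ℕ) : ex 3 (by norm_num) (thN N) = ∑ m ∈ Finset.Icc (-(N:ℤ)) N, C ((-1 : ℤ) ^ m.natAbs) * X ^ (3 * m.natAbs ^ 2) := by
  rw [thN_int, ex, map_sum]
  apply Finset.sum_congr rfl
  intro m _
  rw [map_mul, expand_C, map_pow (expand 3 _), expand_X, pow_mul]

theorem prod2 (N : ℕ) : thN N * ex 3 (by norm_num) (thN N) =
    ∑ v ∈ Finset.Icc (-(N:ℤ)) N ×ˢ Finset.Icc (-(N:ℤ)) N, C ((-1 : ℤ) ^ (v.1.natAbs ^ 2 + 3 * v.2.natAbs ^ 2)) * X ^ (v.1.natAbs ^ 2 + 3 * v.2.natAbs ^ 2) := by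
  rw [ex3_thN, thN_int, Finset.sum_mul_sum, Finset.sum_product]
  apply Finset.sum_congr rfl
  intro x _
  apply Finset.sum_congr rfl
  intro z _
  have h : ∀ k : ℕ, (-1 : ℤ)^(k^2) = (-1)^k := by
    intro k
    rw [sq, pow_mul]
    rcases Nat.even_or_odd k with h' | h' <;> simp [h'.neg_one_pow]
  rw [pow_add (-1 : ℤ), pow_mul (-1 : ℤ) 3, show (-1 : ℤ)^3 = -1 by norm_num, h, h, map_mul]
  ring

noncomputable def Th : ℤ⟦X⟧ := (thT * ex 3 (by norm_num) thT) * (thT * ex 3 (by norm_num) thT)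

theorem coeff_Th (n : ℕ) : coeff n Th = (-1)^n * ((RQ n).ncard : ℤ) := by
  classical
  have h1 := thN_tendsto.mul (((cont_expand 3 (by norm_num)).tendsto thT).comp thN_tendsto)
  have h2 := h1.mul h1
  have h3 := ((continuous_coeff ℤ n).tendsto _).comp h2
  refine tendsto_nhds_unique h3 (tendsto_atTop_of_eventually_const (i₀ := n) ?_)
  intro N hN
  simp only [Function.comp]
  rw [show thN N * (expand 3 (by norm_num)) (thN N) = thN N * ex 3 (by norm_num) (thN N) from rfl, prod2,
    Finset.sum_mul_sum, ← Finset.sum_product', map_sum]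
  have h4 : ∀ v : Q4, coeff n (C ((-1 : ℤ) ^ (v.1.1.natAbs ^ 2 + 3 * v.1.2.natAbs ^ 2)) * X ^ (v.1.1.natAbs ^ 2 + 3 * v.1.2.natAbs ^ 2) * (C ((-1 : ℤ) ^ (v.2.1.natAbs ^ 2 + 3 * v.2.2.natAbs ^ 2)) * X ^ (v.2.1.natAbs ^ 2 + 3 * v.2.2.natAbs ^ 2)))
      = (-1)^n * (if v ∈ RQ n then 1 else 0 : ℤ) := by
    intro v
    rw [mul_mul_mul_comm, ← map_mul, ← pow_add, ← pow_add, coeff_C_mul_X_pow]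
    have : v ∈ RQ n ↔ n = v.1.1.natAbs ^ 2 + 3 * v.1.2.natAbs ^ 2 + (v.2.1.natAbs ^ 2 + 3 * v.2.2.natAbs ^ 2) := by
      rw [← Nat.cast_inj (R := ℤ)]
      push_cast
      simp only [RQ, Set.mem_ofPred_eq, sq_abs]
      exact eq_comm
    by_cases h : v ∈ RQ n
    · rw [if_pos h, if_pos (this.mp h), ← this.mp h, mul_one]
    · rw [if_neg h, if_neg (fun h' => h (this.mpr h')), mul_zero]
  rw [Finset.sum_congr rfl (fun v _ => h4 v), ← Finset.mul_sum, Finset.sum_boole]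
  congr 2
  rw [← Set.ncard_coe_finset]
  congr 1
  ext ⟨⟨x, z⟩, ⟨y, w⟩⟩
  simp only [Finset.coe_filter, Finset.mem_product, Finset.mem_Icc, Set.mem_ofPred_eq]
  constructor
  · exact fun h => h.2
  · intro h
    refine ⟨?_, h⟩
    simp only [RQ, Set.mem_ofPred_eq] at h
    have hN' : (n : ℤ) ≤ N := by exact_mod_cast hN
    have b : ∀ t : ℤ, t^2 ≤ n → -(N:ℤ) ≤ t ∧ t ≤ N := by
      intro t ht
      constructor
      · nlinarith [Int.le_self_sq (-t)]
      · nlinarith [Int.le_self_sq t]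
    refine ⟨⟨b x ?_, b z ?_⟩, b y ?_, b w ?_⟩ <;> nlinarith [sq_nonneg x, sq_nonneg y, sq_nonneg z, sq_nonneg w]

theorem Th4 (n : ℕ) : ((coeff (4*n) Th : ℤ) : ZMod 3) = ((coeff n Th : ℤ) : ZMod 3) := by
  rcases Nat.eq_zero_or_pos n with rfl | hn
  · simp
  · rw [coeff_Th, coeff_Th]
    have h := RQ_main n (by omega)
    have h' := (ZMod.intCast_eq_intCast_iff _ _ 3).mpr h
    push_cast at h' ⊢
    have e4 : (-1 : ZMod 3)^(4*n) = 1 := by rw [pow_mul, Even.neg_one_pow (by decide), one_pow]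
    rw [h', e4]
    rcases Nat.even_or_odd n with h1 | h1
    · simp [h1.neg_one_pow, h1]
    · have : ¬ Even n := Nat.not_even_iff_odd.mpr h1
      simp [h1.neg_one_pow, this]

theorem frob3 (f : (ZMod 3)⟦X⟧) : expand 3 (by norm_num) f = f ^ 3 := by
  have : Fact (Nat.Prime 3) := ⟨Nat.prime_three⟩
  have h := MvPowerSeries.map_frobenius_expand 3 (by norm_num) (f := f)
  rw [ZMod.frobenius_zmod, MvPowerSeries.map_id] at h
  exact h

theorem dissect {R : Type*} [CommRing R] (F H : R⟦X⟧) (n : ℕ) :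
    coeff (4*n) (F * expand 4 (by norm_num) H) = coeff n (PowerSeries.mk (fun m => coeff (4*m) F) * H) := by
  rw [coeff_mul, coeff_mul]
  symm
  apply Finset.sum_of_injOn (fun p : ℕ × ℕ => (4 * p.1, 4 * p.2))
  · rintro ⟨a, b⟩ _ ⟨c, d⟩ _ h
    simp only [Prod.mk.injEq] at h ⊢
    omega
  · rintro ⟨a, b⟩ h
    simp at h ⊢
    omega
  · rintro ⟨a, b⟩ h h'
    have h2 : a + b = 4 * n := by simpa using h
    rw [coeff_expand_of_not_dvd, mul_zero]
    rintro ⟨c, rfl⟩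
    apply h'
    refine ⟨(n - c, c), ?_, ?_⟩
    · simp; omega
    · simp; omega
  · rintro ⟨a, b⟩ _
    simp

theorem mod_three (n : ℕ) (hn : 1 ≤ n) : ((Rbar 4 9 (4 * n) : ℤ) : ZMod 3) = 0 := by
  have : Fact (Nat.Prime 3) := ⟨Nat.prime_three⟩
  have hrel := congrArg (PowerSeries.map (Int.castRingHom (ZMod 3))) relF
  set φ := PowerSeries.map (Int.castRingHom (ZMod 3))
  set t := φ thT with ht
  have hex : ∀ k hk, φ (ex k hk thT) = expand k hk t := fun k hk => map_expand k hk _ _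
  have h9 : expand 9 (by norm_num) t = t^9 := by
    have := expand_mul 3 (by norm_num) 3 (by norm_num) t
    rw [frob3 t, map_pow, frob3, ← pow_mul] at this
    exact this
  have h36 : expand 36 (by norm_num) t = (expand 4 (by norm_num) t)^9 := by
    have := expand_mul 4 (by norm_num) 9 (by norm_num) t
    rw [h9, map_pow] at this
    exact this
  rw [map_mul, map_mul, map_mul, hex, hex, hex, h36, h9] at hrel
  set F := φ gF with hF
  set u := expand 4 (by norm_num) t with hu
  have ct : constantCoeff t = 1 := by
    have : constantCoeff thS = 0 := by
      rw [← coeff_zero_eq_constantCoeff_apply, thS, coeff_mk]; simp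
    have h2 : constantCoeff thT = 1 := by rw [thT, map_add, map_mul, this]; simp
    rw [ht, ← coeff_zero_eq_constantCoeff_apply, coeff_map, coeff_zero_eq_constantCoeff_apply, h2]; simp
  have t0 : t ≠ 0 := by
    intro h; rw [h] at ct; simp at ct
  have u0 : u ≠ 0 := by
    intro h
    have : constantCoeff u = 1 := by rw [hu, constantCoeff_expand, ct]
    rw [h] at this; simp at this
  have h8 : F * u^8 = t^8 := by
    apply mul_left_cancel₀ (mul_ne_zero t0 u0)
    linear_combination hrel
  have hTh : φ Th = t^8 := by
    rw [Th, map_mul, map_mul, hex, frob3]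
    ring
  have h8' : F * expand 4 (by norm_num) (φ Th) = φ Th := by
    rw [hTh, map_pow]; exact h8
  have h10 : PowerSeries.mk (fun m => coeff (4*m) F) * φ Th = 1 * φ Th := by
    ext m
    rw [← dissect, h8', one_mul]
    simp only [φ, coeff_map]
    exact Th4 m
  have h11 := mul_right_cancel₀ (by rw [hTh]; exact pow_ne_zero _ t0) h10
  have h12 := congrArg (coeff n) h11
  rw [coeff_mk, coeff_one, if_neg (by omega), hF] at h12
  simpa [φ, gF] using h12

theorem Rbar_four_nine_four_n_mod_twelve (n : ℕ) (hn : 1 ≤ n) :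
    Rbar 4 9 (4 * n) ≡ 0 [MOD 12] := by
  have h3 := (ZMod.intCast_zmod_eq_zero_iff_dvd _ 3).mp (mod_three n hn)
  have h4 := mod_four n hn
  rw [Nat.modEq_zero_iff_dvd]
  omega
end

section
/- For all integers n ≥ 1, the number of (4,9)-regular overpartitions satisfies R̄_{4,9}(3n) ≡ 0 (mod 8). -/
namespace RbarAux
open PowerSeries Finset

/-- The generalized finite sum. -/
def bsum {A : Type*} [CommRing A] (q : A) (a : ℕ → A) (n : ℕ) : A :=
  a n * a n + 2 * ∑ k ∈ range n, (-1) ^ (k + 1) * q ^ ((k + 1) ^ 2) * (a (n - (k + 1)) * a (n + (k + 1)))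

theorem bsum_succ {A : Type*} [CommRing A] (q : A) (a : ℕ → A)
    (ha : ∀ j, a (j + 1) * (1 - q ^ (j + 1)) = a j) (n : ℕ) :
    (1 - q ^ (2 * (n + 1))) * bsum q a (n + 1) = bsum q a n := by
  -- u k for k ≥ 1
  let u : ℕ → A := fun k => (-1) ^ (k + 1) * q ^ ((k + 1) ^ 2 - (k + 1) + (n + 1)) *
    (a (n - k) * a (n + 1 + k))
  have hstep : ∀ k, k < n → (1 - q ^ (2 * (n + 1))) * ((-1) ^ (k + 1) * q ^ ((k + 1) ^ 2) *
      (a (n + 1 - (k + 1)) * a (n + 1 + (k + 1)))) -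
      (-1) ^ (k + 1) * q ^ ((k + 1) ^ 2) * (a (n - (k + 1)) * a (n + (k + 1))) = u k - u (k + 1) := by
    intro k hk
    obtain ⟨d, rfl⟩ : ∃ d, n = k + 1 + d := ⟨n - (k + 1), by omega⟩
    simp only [u]
    have e1 : k + 1 + d + 1 - (k + 1) = d + 1 := by omega
    have e2 : k + 1 + d - (k + 1) = d := by omega
    have e3 : k + 1 + d - k = d + 1 := by omega
    have e4 : (k + 1) ^ 2 - (k + 1) = k * (k + 1) := by
      rw [show (k + 1) ^ 2 = k * (k + 1) + (k + 1) by ring]; omega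
    have e5 : (k + 1 + 1) ^ 2 - (k + 1 + 1) = (k + 1) * (k + 2) := by
      rw [show (k + 1 + 1) ^ 2 = (k + 1) * (k + 2) + (k + 1 + 1) by ring]; omega
    rw [e1, e2, e3, e4, e5]
    have h1 := ha d
    have h2 := ha (k + 1 + d + (k + 1))
    have e6 : k + 1 + d + 1 + (k + 1) = k + 1 + d + (k + 1) + 1 := by ring
    have e7 : k + 1 + d + 1 + k = k + 1 + d + (k + 1) := by ring
    rw [e6, e7, ← h2, ← h1]
    ring
  have hlast : (1 - q ^ (2 * (n + 1))) * ((-1) ^ (n + 1) * q ^ ((n + 1) ^ 2) *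
      (a (n + 1 - (n + 1)) * a (n + 1 + (n + 1)))) = u n := by
    simp only [u]
    have e4 : (n + 1) ^ 2 - (n + 1) = n * (n + 1) := by
      rw [show (n + 1) ^ 2 = n * (n + 1) + (n + 1) by ring]; omega
    have h2 := ha (n + 1 + n)
    rw [e4, ← h2, show n + 1 + (n + 1) = n + 1 + n + 1 by ring, show n + 1 - (n + 1) = 0 by omega,
      show n - n = 0 by omega]
    ring
  have hzero : (1 - q ^ (2 * (n + 1))) * (a (n + 1) * a (n + 1)) - a n * a n = - 2 * u 0 := by
    simp only [u]
    have h := ha n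
    simp only [Nat.sub_zero, Nat.add_zero]
    rw [← h]
    norm_num
    ring
  have hsum : ∑ k ∈ range n, ((1 - q ^ (2 * (n + 1))) * ((-1) ^ (k + 1) * q ^ ((k + 1) ^ 2) *
      (a (n + 1 - (k + 1)) * a (n + 1 + (k + 1)))) -
      (-1) ^ (k + 1) * q ^ ((k + 1) ^ 2) * (a (n - (k + 1)) * a (n + (k + 1)))) = u 0 - u n := by
    rw [← Finset.sum_range_sub' u n]
    exact sum_congr rfl fun k hk => hstep k (mem_range.mp hk)
  rw [sum_sub_distrib, ← mul_sum] at hsum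
  unfold bsum
  rw [sum_range_succ]
  linear_combination hzero + 2 * hlast + 2 * hsum

theorem bsum_prod {A : Type*} [CommRing A] (q : A) (a : ℕ → A) (h0 : a 0 = 1)
    (ha : ∀ j, a (j + 1) * (1 - q ^ (j + 1)) = a j) (n : ℕ) :
    (∏ i ∈ range n, (1 - q ^ (2 * (i + 1)))) * bsum q a n = 1 := by
  induction n with
  | zero => simp [bsum, h0]
  | succ n ih => rw [prod_range_succ, mul_assoc, bsum_succ q a ha, ih]

abbrev R := ZMod 8

/-- half of theta -/
noncomputable def S (m : ℕ) : R⟦X⟧ :=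
  PowerSeries.mk fun d => ∑ k ∈ range d, if d = m * (k + 1) ^ 2 then (-1) ^ (k + 1) else 0

noncomputable def U (m : ℕ) : R⟦X⟧ :=
  PowerSeries.mk fun d => ∑ k ∈ range d,
    if d = m * (k + 1) ^ 2 ∧ ¬ 3 ∣ k + 1 then (-1) ^ (k + 1) else 0

theorem S_split (m : ℕ) (hm : 0 < m) : S m = S (9 * m) + U m := by
  ext d
  simp only [S, U, coeff_mk, map_add]
  have : ∀ k, (if d = m * (k + 1) ^ 2 then (-1 : R) ^ (k + 1) else 0) =
    (if d = m * (k + 1) ^ 2 ∧ 3 ∣ k + 1 then (-1 : R) ^ (k + 1) else 0) +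
    (if d = m * (k + 1) ^ 2 ∧ ¬ 3 ∣ k + 1 then (-1 : R) ^ (k + 1) else 0) := by
    intro k
    by_cases h : 3 ∣ k + 1 <;> simp [h]
  rw [sum_congr rfl fun k _ => this k, sum_add_distrib]
  congr 1
  symm
  refine sum_bij_ne_zero (fun k _ _ => 3 * k + 2) ?_ ?_ ?_ ?_
  · intro k hk h
    simp only [ne_eq, ite_eq_right_iff, Classical.not_imp] at h
    rw [mem_range]
    have := h.1
    nlinarith
  · intro _ _ _ _ _ _ h; omega
  · intro k hk h
    simp only [ne_eq, ite_eq_right_iff, Classical.not_imp] at h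
    obtain ⟨⟨h1, j, hj⟩, h2⟩ := h
    obtain ⟨i, rfl⟩ : ∃ i, j = i + 1 := ⟨j - 1, by omega⟩
    have e : d = 9 * m * (i + 1) ^ 2 := by rw [h1, hj]; ring
    refine ⟨i, ?_, ?_, by omega⟩
    · rw [mem_range] at *; omega
    · have : Nontrivial R := ⟨0, 1, by decide⟩
      rw [if_pos e]
      exact ((isUnit_one.neg).pow _).ne_zero
  · intro k hk h
    simp only [ne_eq, ite_eq_right_iff, Classical.not_imp] at h
    have h1 := h.1
    rw [if_pos h1, if_pos ⟨by rw [h1]; ring, ⟨k + 1, by ring⟩⟩]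
    rw [show 3 * k + 2 + 1 = 3 * (k + 1) by ring, pow_mul]
    norm_num

/-- support in a residue class mod 3 -/
def Supp (r : ZMod 3) (f : R⟦X⟧) : Prop := ∀ n, coeff n f ≠ 0 → (n : ZMod 3) = r

theorem Supp.mul {r s : ZMod 3} {f g : R⟦X⟧} (hf : Supp r f) (hg : Supp s g) :
    Supp (r + s) (f * g) := by
  intro n h
  rw [coeff_mul] at h
  obtain ⟨p, hp, h⟩ := exists_ne_zero_of_sum_ne_zero h
  rw [← hf _ (left_ne_zero_of_mul h), ← hg _ (right_ne_zero_of_mul h), ← mem_antidiagonal.mp hp]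
  push_cast; rfl

theorem Supp.coeff_eq {r : ZMod 3} {f : R⟦X⟧} (hf : Supp r f) {n : ℕ} (h : (n : ZMod 3) ≠ r) :
    coeff n f = 0 := by
  by_contra h'; exact h (hf n h')

theorem supp_S (m : ℕ) : Supp 0 (S (9 * m)) := by
  intro n h
  rw [S, coeff_mk] at h
  obtain ⟨p, hp, h⟩ := exists_ne_zero_of_sum_ne_zero h
  simp only [ne_eq, ite_eq_right_iff, Classical.not_imp] at h
  rw [h.1]; push_cast
  rw [show (9 : ZMod 3) = 0 by decide]; ring

theorem supp_U (m : ℕ) (hm : (m : ZMod 3) = 1) : Supp 1 (U m) := by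
  intro n h
  rw [U, coeff_mk] at h
  obtain ⟨p, hp, h⟩ := exists_ne_zero_of_sum_ne_zero h
  simp only [ne_eq, ite_eq_right_iff, Classical.not_imp] at h
  obtain ⟨⟨h1, h2⟩, -⟩ := h
  rw [h1]
  rw [← ZMod.natCast_eq_zero_iff] at h2
  push_cast at *
  rw [hm]
  generalize (p : ZMod 3) = x at *
  revert x; decide

theorem supp_one : Supp 0 (1 : R⟦X⟧) := by
  intro n h
  rw [coeff_one] at h
  have : n = 0 := by by_contra h'; simp [h'] at h
  simp [this]

theorem supp_G (m : ℕ) : Supp 0 (1 + 2 * S (9 * m)) := by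
  intro n h
  by_contra h'
  apply h
  rw [two_mul, map_add, map_add, (supp_S m).coeff_eq h', supp_one.coeff_eq h']
  simp

theorem const_S (m : ℕ) : constantCoeff (S m) = 0 := by
  rw [← coeff_zero_eq_constantCoeff_apply, S, coeff_mk]; simp

theorem isUnit_G (m : ℕ) : IsUnit (1 + 2 * S m) := by
  rw [PowerSeries.isUnit_iff_constantCoeff]
  simp [const_S]

/-- keep exponents divisible by 3 -/
noncomputable def pr (f : R⟦X⟧) : R⟦X⟧ :=
  PowerSeries.mk fun n => if (n : ZMod 3) = 0 then coeff n f else 0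

theorem pr_mul (f K : R⟦X⟧) (hK : Supp 0 K) : pr (f * K) = pr f * K := by
  ext n
  simp only [pr, coeff_mk, coeff_mul]
  by_cases h : (n : ZMod 3) = 0
  · rw [if_pos h]
    refine sum_congr rfl fun p hp => ?_
    by_cases hz : coeff p.2 K = 0
    · simp [hz]
    · have h2 := hK _ hz
      rw [← mem_antidiagonal.mp hp] at h
      push_cast at h
      rw [h2, add_zero] at h
      rw [if_pos h]
  · rw [if_neg h]
    symm
    refine sum_eq_zero fun p hp => ?_
    by_cases hz : coeff p.2 K = 0
    · simp [hz]
    · have h2 := hK _ hz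
      rw [← mem_antidiagonal.mp hp] at h
      push_cast at h
      rw [h2, add_zero] at h
      rw [if_neg h, zero_mul]

theorem eight_zero : (8 : R⟦X⟧) = 0 := by
  have : ((8 : ℕ) : R⟦X⟧) = 0 := by
    rw [← map_natCast (C : R →+* R⟦X⟧), show ((8 : ℕ) : R) = 0 by decide, map_zero]
  exact_mod_cast this

theorem final (F : R⟦X⟧)
    (h : F * (1 + 2 * S 1) * (1 + 2 * S 36) = (1 + 2 * S 4) * (1 + 2 * S 9))
    (n : ℕ) (hn : 1 ≤ n) : coeff (3 * n) F = 0 := by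
  have h1 := S_split 1 (by norm_num)
  have h4 := S_split 4 (by norm_num)
  norm_num at h1 h4
  have u1 := supp_U 1 (by decide)
  have u4 := supp_U 4 (by decide)
  have g9 := supp_G 1
  have g36 := supp_G 4
  have i9 := isUnit_G 9
  have i36 := isUnit_G 36
  norm_num at g9 g36
  rw [h1, h4] at h
  generalize U 1 = u at *
  generalize U 4 = v at *
  have h' : F * ((1 + 2 * S 9) + 2 * u) * (1 + 2 * S 36) =
      ((1 + 2 * S 36) + 2 * v) * (1 + 2 * S 9) := by linear_combination h
  clear h h1 h4
  generalize 1 + 2 * S 9 = A at *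
  generalize 1 + 2 * S 36 = B at *
  have e8 := eight_zero
  have key : (F - 1) * (A * A * B) =
      2 * (v * (A * A)) - 2 * (A * (u * B)) + 4 * (u * u * B) - 4 * (v * (A * u)) := by
    apply i9.mul_left_cancel
    linear_combination (A ^ 2 - 2 * A * u + 4 * u ^ 2) * h' + (-F * u ^ 3 * B + A * v * u ^ 2) * e8
  have hK : Supp 0 (A * A * B) := by simpa using (g9.mul g9).mul g36
  have iK : IsUnit (A * A * B) := (i9.mul i9).mul i36
  have s1 : Supp 1 (v * (A * A)) := by simpa using u4.mul (g9.mul g9)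
  have s2 : Supp 1 (A * (u * B)) := by simpa using g9.mul (u1.mul g36)
  have s3 : Supp (1 + 1) (u * u * B) := by simpa using (u1.mul u1).mul g36
  have s4 : Supp (1 + 1) (v * (A * u)) := by simpa using u4.mul (g9.mul u1)
  have hp : pr ((F - 1) * (A * A * B)) = 0 := by
    rw [key]
    ext n
    simp only [pr, coeff_mk]
    split_ifs with hh
    · have t1 := s1.coeff_eq (n := n) (by rw [hh]; decide)
      have t2 := s2.coeff_eq (n := n) (by rw [hh]; decide)
      have t3 := s3.coeff_eq (n := n) (by rw [hh]; decide)
      have t4 := s4.coeff_eq (n := n) (by rw [hh]; decide)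
      have c2 : (2 : R⟦X⟧) = C 2 := (map_ofNat C 2).symm
      have c4 : (4 : R⟦X⟧) = C 4 := (map_ofNat C 4).symm
      rw [c2, c4]
      simp only [map_add, map_sub, coeff_C_mul, t1, t2, t3, t4]
      simp
    · simp
  rw [pr_mul _ _ hK] at hp
  have hz : pr (F - 1) = 0 := by
    apply iK.mul_right_cancel
    rw [hp, zero_mul]
  have := congrArg (coeff (3 * n)) hz
  simp only [pr, coeff_mk] at this
  rw [if_pos (by push_cast; rw [show (3 : ZMod 3) = 0 by decide, zero_mul]), map_sub, coeff_one,
    if_neg (by omega)] at this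
  simpa using this


section Top
open PowerSeries.WithPiTopology Filter Topology

local instance : TopologicalSpace R := ⊥
local instance : DiscreteTopology R := ⟨rfl⟩

theorem order_tendsto (c : R⟦X⟧) (p : ℕ → Prop) [DecidablePred p] (e : ℕ → ℕ) (he : ∀ i, i + 1 ≤ e i) :
    Tendsto (fun i => (if p (i + 1) then c * X ^ (e i) else (0 : R⟦X⟧)).order) atTop (𝓝 ⊤) := by
  refine ENat.tendsto_nhds_top_iff_natCast_lt.mpr (fun n ↦ Filter.eventually_atTop.mpr ⟨n, ?_⟩)
  intro i hi
  refine lt_of_lt_of_le (b := ((i + 1 : ℕ) : ℕ∞)) (by exact_mod_cast Nat.lt_succ_of_le hi) ?_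
  apply PowerSeries.nat_le_order
  intro j hj
  split_ifs
  · rw [coeff_mul_X_pow', if_neg]
    have := he i
    omega
  · simp

theorem mult_if (c : R⟦X⟧) (p : ℕ → Prop) [DecidablePred p] :
    Multipliable (fun i => if p (i + 1) then 1 + c * X ^ (i + 1) else (1 : R⟦X⟧)) := by
  have := multipliable_one_add_of_tendsto_order_atTop_nhds_top _ (order_tendsto c p (fun i => i + 1) (fun i => le_rfl))
  refine this.congr fun i => ?_
  split_ifs <;> simp

theorem mult_m (c : R⟦X⟧) (m : ℕ) (hm : 0 < m) :
    Multipliable (fun i => 1 + c * X ^ (m * (i + 1)) : ℕ → R⟦X⟧) := by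
  have := multipliable_one_add_of_tendsto_order_atTop_nhds_top _ (order_tendsto c (fun _ => True)
    (fun i => m * (i + 1)) (fun i => Nat.le_mul_of_pos_left _ hm))
  simpa using this

noncomputable def Q (c : R⟦X⟧) (p : ℕ → Prop) [DecidablePred p] : R⟦X⟧ :=
  ∏' i, if p (i + 1) then 1 + c * X ^ (i + 1) else (1 : R⟦X⟧)

noncomputable def Z (c : R⟦X⟧) (m : ℕ) : R⟦X⟧ := ∏' i, (1 + c * X ^ (m * (i + 1)))

theorem Q_dvd (c : R⟦X⟧) (m : ℕ) (hm : 0 < m) : Q c (m ∣ ·) = Z c m := by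
  unfold Q Z
  refine tprod_eq_tprod_of_ne_one_bij (fun i ↦ m * (i.val + 1) - 1) ?_ ?_ ?_
  · intro a b h
    have h1 : 0 < m * (a.val + 1) := by positivity
    have h2 : 0 < m * (b.val + 1) := by positivity
    have h3 : m * (a.val + 1) = m * (b.val + 1) := by simp only at h; omega
    have := Nat.eq_of_mul_eq_mul_left hm h3
    exact SetCoe.ext (by omega)
  · intro i hi
    rw [Function.mem_mulSupport] at hi
    have hd : m ∣ i + 1 := by by_contra h; simp [h] at hi
    rw [if_pos hd] at hi
    obtain ⟨j, hj⟩ := hd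
    obtain ⟨l, rfl⟩ : ∃ l, j = l + 1 := ⟨j - 1, by rcases j with _ | j <;> simp at hj ⊢⟩
    refine ⟨⟨l, ?_⟩, ?_⟩
    · rw [Function.mem_mulSupport, ← hj]; exact hi
    · simp only; omega
  · intro i
    have h1 : 0 < m * (i.val + 1) := by positivity
    have : m * (i.val + 1) - 1 + 1 = m * (i.val + 1) := by omega
    simp only [this]
    rw [if_pos (Dvd.intro _ rfl)]

theorem Q_reg (c : R⟦X⟧) :
    Q c (fun i => ¬ 4 ∣ i ∧ ¬ 9 ∣ i) * Z c 4 * Z c 9 = Z c 1 * Z c 36 := by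
  rw [← Q_dvd c 4 (by norm_num), ← Q_dvd c 9 (by norm_num), ← Q_dvd c 1 (by norm_num),
    ← Q_dvd c 36 (by norm_num)]
  unfold Q
  rw [← (mult_if c (fun i => ¬ 4 ∣ i ∧ ¬ 9 ∣ i)).tprod_mul (mult_if c (4 ∣ ·)),
    ← ((mult_if c (fun i => ¬ 4 ∣ i ∧ ¬ 9 ∣ i)).mul (mult_if c (4 ∣ ·))).tprod_mul (mult_if c (9 ∣ ·)),
    ← (mult_if c (1 ∣ ·)).tprod_mul (mult_if c (36 ∣ ·))]
  refine tprod_congr fun i => ?_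
  have : 36 ∣ i + 1 ↔ (4 ∣ i + 1 ∧ 9 ∣ i + 1) := by omega
  by_cases h4 : 4 ∣ i + 1 <;> by_cases h9 : 9 ∣ i + 1 <;> simp [h4, h9, this]

theorem part_dvd (c : R⟦X⟧) (m : ℕ) (hm : 0 < m) (n k : ℕ) :
    X ^ (n + 1) ∣ (∏ i ∈ range (n + k), (1 + c * X ^ (m * (i + 1))))
      - ∏ i ∈ range n, (1 + c * X ^ (m * (i + 1))) := by
  induction k with
  | zero => simp
  | succ k ih =>
    rw [← add_assoc, prod_range_succ, mul_add, mul_one, add_sub_right_comm]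
    refine dvd_add ih ?_
    refine Dvd.dvd.mul_left (Dvd.dvd.mul_left (pow_dvd_pow _ ?_) _) _
    nlinarith

theorem Z_dvd (c : R⟦X⟧) (m : ℕ) (hm : 0 < m) (n : ℕ) :
    X ^ (n + 1) ∣ Z c m - ∏ i ∈ range n, (1 + c * X ^ (m * (i + 1))) := by
  rw [PowerSeries.X_pow_dvd_iff]
  intro j hj
  rw [map_sub, sub_eq_zero]
  have h1 := (mult_m c m hm).hasProd.tendsto_prod_nat
  rw [tendsto_iff_coeff_tendsto] at h1
  refine tendsto_nhds_unique (h1 j) ?_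
  refine tendsto_const_nhds.congr' ?_
  filter_upwards [eventually_ge_atTop n] with N hN
  obtain ⟨k, rfl⟩ := Nat.exists_eq_add_of_le hN
  have := (PowerSeries.X_pow_dvd_iff.mp (part_dvd c m hm n k)) j hj
  rw [map_sub, sub_eq_zero] at this
  exact this.symm

theorem const_Z (c : R⟦X⟧) (m : ℕ) (hm : 0 < m) : constantCoeff (Z c m) = 1 := by
  have := (PowerSeries.X_pow_dvd_iff.mp (Z_dvd c m hm 0)) 0 (by norm_num)
  simp only [range_zero, prod_empty, map_sub, sub_eq_zero] at this
  simpa using this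

theorem isUnit_Z (c : R⟦X⟧) (m : ℕ) (hm : 0 < m) : IsUnit (Z c m) := by
  rw [PowerSeries.isUnit_iff_constantCoeff, const_Z c m hm]; exact isUnit_one

theorem S_dvd (m : ℕ) (hm : 0 < m) (n : ℕ) :
    X ^ (n + 1) ∣ S m - ∑ k ∈ range n, (-1 : R⟦X⟧) ^ (k + 1) * X ^ (m * (k + 1) ^ 2) := by
  rw [PowerSeries.X_pow_dvd_iff]
  intro j hj
  rw [map_sub, sub_eq_zero, S, coeff_mk, map_sum]
  have : ∀ k, coeff j ((-1 : R⟦X⟧) ^ (k + 1) * X ^ (m * (k + 1) ^ 2)) =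
      if j = m * (k + 1) ^ 2 then (-1 : R) ^ (k + 1) else 0 := by
    intro k
    rw [show (-1 : R⟦X⟧) ^ (k + 1) = C ((-1 : R) ^ (k + 1)) by simp, coeff_C_mul, coeff_X_pow]
    simp
  rw [sum_congr rfl fun k _ => this k]
  refine sum_subset (range_subset_range.mpr (by omega)) ?_
  intro k _ hk
  rw [if_neg]
  intro h
  apply hk
  rw [mem_range]
  nlinarith

theorem prod_sq (m n : ℕ) : (∏ i ∈ range n, (1 + (-1 : R⟦X⟧) * X ^ (m * (i + 1)))) *
    (∏ i ∈ range n, (1 + (1 : R⟦X⟧) * X ^ (m * (i + 1)))) =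
    ∏ i ∈ range n, (1 - ((X : R⟦X⟧) ^ m) ^ (2 * (i + 1))) := by
  rw [← prod_mul_distrib]
  refine prod_congr rfl fun i _ => ?_
  rw [pow_mul, mul_comm 2 (i + 1), pow_mul ((X : R⟦X⟧) ^ m)]
  ring

theorem gauss (m : ℕ) (hm : 0 < m) : (1 + 2 * S m) * Z 1 m = Z (-1) m := by
  let En : ℕ → R⟦X⟧ := fun n => ∏ i ∈ range n, (1 + (-1 : R⟦X⟧) * X ^ (m * (i + 1)))
  let Pn : ℕ → R⟦X⟧ := fun n => ∏ i ∈ range n, (1 + (1 : R⟦X⟧) * X ^ (m * (i + 1)))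
  have hu : ∀ n, IsUnit (En n) := by
    intro n
    rw [PowerSeries.isUnit_iff_constantCoeff, map_prod]
    simp [hm.ne']
  choose a ha using fun n => (hu n).exists_left_inv
  obtain ⟨b, hb⟩ := (isUnit_Z (-1) m hm).exists_left_inv
  have hE : ∀ n, X ^ (n + 1) ∣ Z (-1) m - En n := Z_dvd (-1) m hm
  have hP : ∀ n, X ^ (n + 1) ∣ Z 1 m - Pn n := Z_dvd 1 m hm
  have hab : ∀ n, X ^ (n + 1) ∣ a n - b := by
    intro n
    have : a n - b = a n * b * (Z (-1) m - En n) := by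
      linear_combination (-a n) * hb + b * ha n
    rw [this]
    exact (hE n).mul_left _
  have h0 : a 0 = 1 := by simpa [En] using ha 0
  have hstep : ∀ j, a (j + 1) * (1 - ((X : R⟦X⟧) ^ m) ^ (j + 1)) = a j := by
    intro j
    apply (hu j).mul_right_cancel
    have h := ha (j + 1)
    rw [show En (j + 1) = En j * (1 + (-1 : R⟦X⟧) * X ^ (m * (j + 1))) from
      prod_range_succ _ _, pow_mul] at h
    rw [ha j]
    linear_combination h
  have hfin : ∀ n, En n * Pn n * bsum (X ^ m) a n = 1 := by
    intro n
    have := bsum_prod ((X : R⟦X⟧) ^ m) a h0 hstep n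
    rw [← prod_sq] at this
    exact this
  have hbs : ∀ n, X ^ (n + 1) ∣ bsum (X ^ m) a n - b * b * (1 + 2 * S m) := by
    intro n
    have e : bsum (X ^ m) a n - b * b * (1 + 2 * S m) =
      (a n - b) * (a n + b) + 2 * (∑ k ∈ range n, (-1 : R⟦X⟧) ^ (k + 1) * (X ^ (m * (k + 1) ^ 2) *
        ((a (n - (k + 1)) - b) * a (n + (k + 1)) + b * (a (n + (k + 1)) - b)))) -
      b * b * 2 * (S m - ∑ k ∈ range n, (-1 : R⟦X⟧) ^ (k + 1) * X ^ (m * (k + 1) ^ 2)) := by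
      have : ∑ k ∈ range n, (-1 : R⟦X⟧) ^ (k + 1) * (X ^ (m * (k + 1) ^ 2) *
        ((a (n - (k + 1)) - b) * a (n + (k + 1)) + b * (a (n + (k + 1)) - b))) =
        ∑ k ∈ range n, (-1) ^ (k + 1) * ((X : R⟦X⟧) ^ m) ^ ((k + 1) ^ 2) * (a (n - (k + 1)) * a (n + (k + 1)))
         - b * b * ∑ k ∈ range n, (-1 : R⟦X⟧) ^ (k + 1) * X ^ (m * (k + 1) ^ 2) := by
        rw [mul_sum, ← sum_sub_distrib]
        refine sum_congr rfl fun k _ => ?_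
        rw [← pow_mul]
        ring
      rw [this, bsum]
      ring
    rw [e]
    refine dvd_sub (dvd_add ((hab n).mul_right _) (Dvd.dvd.mul_left (dvd_sum fun k hk => ?_) _))
      ((S_dvd m hm n).mul_left _)
    refine Dvd.dvd.mul_left ?_ _
    rw [mem_range] at hk
    have h1 : (X : R⟦X⟧) ^ (n - (k + 1) + 1) ∣
        (a (n - (k + 1)) - b) * a (n + (k + 1)) + b * (a (n + (k + 1)) - b) :=
      dvd_add ((hab _).mul_right _)
        (((pow_dvd_pow _ (by omega)).trans (hab (n + (k + 1)))).mul_left _)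
    have h2 := mul_dvd_mul (dvd_refl ((X : R⟦X⟧) ^ (m * (k + 1) ^ 2))) h1
    rw [← pow_add] at h2
    refine (pow_dvd_pow _ ?_).trans h2
    have : k + 1 ≤ m * (k + 1) ^ 2 := by nlinarith
    omega
  have hone : Z (-1) m * Z 1 m * (b * b * (1 + 2 * S m)) = 1 := by
    rw [← sub_eq_zero]
    ext n
    have : X ^ (n + 1) ∣ Z (-1) m * Z 1 m * (b * b * (1 + 2 * S m)) - 1 := by
      have e : Z (-1) m * Z 1 m * (b * b * (1 + 2 * S m)) - 1 =
        (Z (-1) m - En n) * (Z 1 m * (b * b * (1 + 2 * S m)))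
        + (Z 1 m - Pn n) * (En n * (b * b * (1 + 2 * S m)))
        - (bsum (X ^ m) a n - b * b * (1 + 2 * S m)) * (En n * Pn n) := by
        linear_combination hfin n
      rw [e]
      exact dvd_sub (dvd_add ((hE n).mul_right _) ((hP n).mul_right _)) ((hbs n).mul_right _)
    simpa using (PowerSeries.X_pow_dvd_iff.mp this) n (by omega)
  linear_combination Z (-1) m * hone - (1 + 2 * S m) * Z 1 m * (b * Z (-1) m + 1) * hb

theorem main_id (F : R⟦X⟧) (h : F * Q (-1) (fun i => ¬ 4 ∣ i ∧ ¬ 9 ∣ i) = Q 1 (fun i => ¬ 4 ∣ i ∧ ¬ 9 ∣ i)) :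
    F * (1 + 2 * S 1) * (1 + 2 * S 36) = (1 + 2 * S 4) * (1 + 2 * S 9) := by
  have e := Q_reg (-1)
  have p := Q_reg 1
  rw [← gauss 1 (by norm_num), ← gauss 36 (by norm_num), ← gauss 4 (by norm_num), ← gauss 9 (by norm_num)] at e
  apply (isUnit_Z 1 1 (by norm_num)).mul_right_cancel
  apply (isUnit_Z 1 36 (by norm_num)).mul_right_cancel
  linear_combination (-F) * e + (1 + 2 * S 4) * (1 + 2 * S 9) * p + (1 + 2 * S 4) * (1 + 2 * S 9) * Z 1 4 * Z 1 9 * h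

theorem L_id (p : ℕ → Prop) [DecidablePred p] :
    (PowerSeries.mk fun n ↦ (#(Nat.Partition.restricted n p) : R)) * Q (-1) p = 1 := by
  rw [Nat.Partition.powerSeriesMk_card_restricted_eq_tprod, Q,
    ← (Nat.Partition.multipliable_powerSeriesMk_card_restricted R p).tprod_mul (mult_if _ _)]
  refine (tprod_congr fun i => ?_).trans (tprod_one (α := R⟦X⟧) (β := ℕ))
  split_ifs
  · simp_rw [pow_mul]
    rw [neg_one_mul, ← sub_eq_add_neg, tsum_pow_mul_one_sub_of_constantCoeff_eq_zero (by simp)]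
  · simp

theorem D_id (p : ℕ → Prop) [DecidablePred p] :
    (PowerSeries.mk fun n ↦
      (#{x : n.Partition | x.parts.Nodup ∧ ∀ i ∈ x.parts, p i} : R)) = Q 1 p := by
  have h := Nat.Partition.genFun_eq_tprod (fun i c ↦ if p i ∧ c < 2 then (1 : R) else 0)
  trans Nat.Partition.genFun (fun i c ↦ if p i ∧ c < 2 then (1 : R) else 0)
  · simp_rw [Nat.Partition.genFun, card_filter, Finsupp.prod, prod_boole]
    ext n
    simp only [coeff_mk, Nat.cast_sum, Nat.cast_ite, Nat.cast_one, Nat.cast_zero]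
    refine sum_congr rfl fun x _ => ?_
    congr 1
    simp only [Multiset.toFinsupp_support, Multiset.mem_toFinset, Multiset.toFinsupp_apply,
      eq_iff_iff, Multiset.nodup_iff_count_le_one]
    constructor
    · rintro ⟨h1, h2⟩ i hi
      exact ⟨h2 i hi, by have := h1 i; omega⟩
    · intro h
      refine ⟨fun i => ?_, fun i hi => (h i hi).1⟩
      by_cases hi : i ∈ x.parts
      · have := (h i hi).2; omega
      · rw [Multiset.count_eq_zero_of_notMem hi]; omega
  · rw [h, Q]
    refine tprod_congr fun i => ?_
    rw [tsum_eq_single 0]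
    · split_ifs with h1 h2 h2 <;> simp_all
    · intro b hb
      rw [if_neg (by omega), zero_smul]

end Top

theorem Rbar_gen : (PowerSeries.mk fun n => (Rbar 4 9 n : R)) =
    (PowerSeries.mk fun n ↦ (#(Nat.Partition.restricted n (fun i => ¬ 4 ∣ i ∧ ¬ 9 ∣ i)) : R)) *
    (PowerSeries.mk fun n ↦
      (#{x : n.Partition | x.parts.Nodup ∧ ∀ i ∈ x.parts, ¬ 4 ∣ i ∧ ¬ 9 ∣ i} : R)) := by
  ext n
  rw [coeff_mul, coeff_mk, Rbar]
  push_cast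
  refine sum_congr rfl fun p _ => ?_
  simp only [coeff_mk, regularCount, regularDistinctCount, Fintype.card_subtype,
    Nat.Partition.restricted]

end RbarAux

theorem Rbar_four_nine_three_n_mod_eight (n : ℕ) (hn : 1 ≤ n) :
    Rbar 4 9 (3 * n) ≡ 0 [MOD 8] := by
  rw [← ZMod.natCast_eq_natCast_iff, Nat.cast_zero]
  have h := RbarAux.final (PowerSeries.mk fun n => (Rbar 4 9 n : RbarAux.R))
    (RbarAux.main_id _ (by
      rw [RbarAux.Rbar_gen, RbarAux.D_id]
      linear_combination RbarAux.Q 1 (fun i => ¬ 4 ∣ i ∧ ¬ 9 ∣ i) *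
        RbarAux.L_id (fun i => ¬ 4 ∣ i ∧ ¬ 9 ∣ i))) n hn
  rwa [PowerSeries.coeff_mk] at h
end

section
/- Let k ≥ 2 be an integer and let r with 1 ≤ r ≤ k−1 be a quadratic nonresidue modulo k (i.e., there is no integer m with m² ≡ r (mod k)). Then for all integers n ≥ 0, the number of (4,9)-regular overpartitions satisfies R̄_{4,9}(4(kn+r)) ≡ 0 (mod 24). -/
section aux
open PowerSeries Finset Filter
open scoped PowerSeries.WithPiTopology

theorem gauss_finite {R : Type*} [CommRing R] (x : R) (n : ℕ) :
    (∏ j ∈ range n, (1 + x ^ (j+1))) * (1 + 2 * ∑ s ∈ range n, (-1) ^ (s+1) * x ^ ((s+1)^2)) =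
    (∏ j ∈ range n, (1 - x ^ (j+1))) + 2 * ∑ s ∈ range n, (-1) ^ (s+1) * x ^ ((s+1)*(n+1)) *
      ((∏ j ∈ Ico (s+1) n, (1 - x ^ (j+1))) * ∏ j ∈ range s, (1 + x ^ (j+1))) := by
  induction n with
  | zero => simp
  | succ n ih =>
    set g : ℕ → R := fun s => (-1) ^ s * x ^ ((s+1)*(n+1)) *
      ((∏ j ∈ Ico s n, (1 - x ^ (j+1))) * ∏ j ∈ range s, (1 + x ^ (j+1))) with hg
    have key : ∑ s ∈ range n, (-1) ^ (s+1) * x ^ ((s+1)*(n+1+1)) *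
        ((∏ j ∈ Ico (s+1) (n+1), (1 - x ^ (j+1))) * ∏ j ∈ range s, (1 + x ^ (j+1)))
        = (1 + x ^ (n+1)) * ∑ s ∈ range n, (-1) ^ (s+1) * x ^ ((s+1)*(n+1)) *
      ((∏ j ∈ Ico (s+1) n, (1 - x ^ (j+1))) * ∏ j ∈ range s, (1 + x ^ (j+1)))
        + ∑ s ∈ range n, (g s - g (s+1)) := by
      rw [mul_sum, ← sum_add_distrib]
      refine sum_congr rfl fun s hs => ?_
      have hs' : s < n := mem_range.1 hs
      simp only [hg]
      rw [prod_Ico_succ_top (by omega : s+1 ≤ n), prod_eq_prod_Ico_succ_bot hs', prod_range_succ]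
      ring
    rw [sum_range_sub'] at key
    rw [sum_range_succ _ n, sum_range_succ _ n, key, prod_range_succ, prod_range_succ]
    have h0 : g 0 = x ^ (n+1) * ∏ j ∈ range n, (1 - x ^ (j+1)) := by
      simp [hg]
    have hn : g n = (-1) ^ n * x ^ ((n+1)^2) * ∏ j ∈ range n, (1 + x ^ (j+1)) := by
      simp [hg, sq]
    rw [h0, hn]
    simp only [Ico_self, prod_empty]
    linear_combination (1 + x^(n+1)) * ih

noncomputable def th : ℤ⟦X⟧ :=
  PowerSeries.mk fun n => if IsSquare n then (if n = 0 then 1 else 2 * (-1) ^ n) else 0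

theorem th_trunc (n d : ℕ) (h : d < n) :
    coeff d (1 + 2 * ∑ s ∈ range n, (-1) ^ (s+1) * (X:ℤ⟦X⟧) ^ ((s+1)^2)) = coeff d th := by
  have h2 : (2 : ℤ⟦X⟧) = C 2 := by simp
  have h1 : ∀ s : ℕ, ((-1 : ℤ⟦X⟧)) ^ s = C ((-1) ^ s) := by intro s; simp
  simp only [h1, h2, map_add, coeff_C_mul, map_sum, coeff_X_pow, th, coeff_mk, coeff_one]
  rcases Nat.eq_zero_or_pos d with rfl | hd
  · rw [sum_eq_zero]
    · simp
    · intro s _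
      rw [if_neg, mul_zero]
      have : 0 < (s+1)^2 := by positivity
      omega
  by_cases hsq : IsSquare d
  · obtain ⟨t, ht⟩ := hsq
    have ht0 : t ≠ 0 := by rintro rfl; simp at ht; omega
    have htn : t - 1 ∈ range n := by
      rw [mem_range]; nlinarith [Nat.sub_le t 1, Nat.pos_of_ne_zero ht0]
    rw [sum_eq_single_of_mem (t-1) htn]
    · have : t - 1 + 1 = t := by omega
      rw [this]
      have hp : ((-1:ℤ)) ^ d = (-1) ^ t := by
        rw [ht, pow_mul]
        rcases Nat.even_or_odd t with h | h <;> simp [h.neg_one_pow]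
      rw [if_pos (show IsSquare d from ⟨t, ht⟩), if_pos (show d = t ^ 2 by rw [ht, sq]),
        if_neg (show ¬ d = 0 by omega), if_neg (show ¬ d = 0 by omega), hp]
      ring
    · intro s _ hs
      rw [if_neg, mul_zero]
      intro hh
      apply hs
      have : (s+1)^2 = t^2 := by rw [← hh, ht, sq]
      have := Nat.pow_left_injective (two_ne_zero) this
      omega
  · rw [if_neg hsq, if_neg (by omega), sum_eq_zero]
    · simp
    · intro s _
      rw [if_neg, mul_zero]
      intro hh
      exact hsq ⟨s+1, by rw [hh, sq]⟩

theorem mult_one_add (f : ℕ → ℤ⟦X⟧) (h : ∀ i, X ^ (i+1) ∣ f i) : Multipliable (fun i => 1 + f i) := by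
  apply PowerSeries.WithPiTopology.multipliable_one_add_of_tendsto_order_atTop_nhds_top
  refine ENat.tendsto_nhds_top_iff_natCast_lt.mpr (fun n ↦ Filter.eventually_atTop.mpr ⟨n, ?_⟩)
  intro m hm
  have := PowerSeries.X_pow_dvd_iff.1 (h m)
  refine lt_of_lt_of_le (b := ((m+1 : ℕ) : ℕ∞)) (by exact_mod_cast Nat.lt_succ_of_le hm) ?_
  exact PowerSeries.le_order _ _ (fun i hi => this i (by exact_mod_cast hi))

noncomputable def PD : ℤ⟦X⟧ := ∏' i : ℕ, (1 + X ^ (i+1))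
noncomputable def PE : ℤ⟦X⟧ := ∏' i : ℕ, (1 - X ^ (i+1))

theorem hasProd_PD : HasProd (fun i : ℕ => (1 + X ^ (i+1) : ℤ⟦X⟧)) PD :=
  (mult_one_add (fun i => X ^ (i+1)) (fun i => dvd_rfl)).hasProd
theorem hasProd_PE : HasProd (fun i : ℕ => (1 - X ^ (i+1) : ℤ⟦X⟧)) PE := by
  have := (mult_one_add (fun i => -X ^ (i+1)) (fun i => (dvd_neg.2 dvd_rfl)))
  simp only [← sub_eq_add_neg] at this
  exact this.hasProd

theorem gauss_s7 : PD * th = PE := by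
  have h1 : Tendsto (fun n : ℕ => (1 + 2 * ∑ s ∈ range n, (-1) ^ (s+1) * (X:ℤ⟦X⟧) ^ ((s+1)^2)))
      atTop (nhds th) := by
    rw [WithPiTopology.tendsto_iff_coeff_tendsto]
    intro d
    exact tendsto_atTop_of_eventually_const (i₀ := d+1) fun n hn => th_trunc n d hn
  have h2 := hasProd_PD.tendsto_prod_nat.mul h1
  have h3 : Tendsto (fun n : ℕ => (2 * ∑ s ∈ range n, (-1) ^ (s+1) * (X:ℤ⟦X⟧) ^ ((s+1)*(n+1)) *
      ((∏ j ∈ Ico (s+1) n, (1 - X ^ (j+1))) * ∏ j ∈ range s, (1 + X ^ (j+1)))))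
      atTop (nhds 0) := by
    rw [WithPiTopology.tendsto_iff_coeff_tendsto]
    intro d
    refine tendsto_atTop_of_eventually_const (i₀ := d) fun n hn => ?_
    rw [map_zero]
    have : (X : ℤ⟦X⟧) ^ (n+1) ∣ (2 * ∑ s ∈ range n, (-1) ^ (s+1) * (X:ℤ⟦X⟧) ^ ((s+1)*(n+1)) *
      ((∏ j ∈ Ico (s+1) n, (1 - X ^ (j+1))) * ∏ j ∈ range s, (1 + X ^ (j+1)))) := by
      refine Dvd.dvd.mul_left (dvd_sum fun s _ => ?_) _
      refine Dvd.dvd.mul_right (Dvd.dvd.mul_left (pow_dvd_pow _ ?_) _) _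
      nlinarith
    exact X_pow_dvd_iff.1 this d (by omega)
  have h4 := hasProd_PE.tendsto_prod_nat.add h3
  simp only [gauss_finite, add_zero] at h2 h4
  exact tendsto_nhds_unique h2 h4

theorem cont_expand_s7 (m : ℕ) (hm : m ≠ 0) : Continuous (expand m hm : ℤ⟦X⟧ →ₐ[ℤ] ℤ⟦X⟧) := by
  rw [continuous_iff_continuousAt]
  intro f
  rw [ContinuousAt, WithPiTopology.tendsto_iff_coeff_tendsto]
  intro d
  simp only [coeff_expand]
  split_ifs
  · exact (WithPiTopology.continuous_coeff ℤ _).continuousAt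
  · exact tendsto_const_nhds

theorem cont_resc : Continuous (rescale (-1:ℤ)) := by
  rw [continuous_iff_continuousAt]
  intro f
  rw [ContinuousAt, WithPiTopology.tendsto_iff_coeff_tendsto]
  intro d
  simp only [coeff_rescale]
  exact ((WithPiTopology.continuous_coeff ℤ d).const_smul ((-1:ℤ)^d)).continuousAt

theorem hasProd_expand (m : ℕ) (hm : m ≠ 0) (ε : ℤ⟦X⟧) (P : ℤ⟦X⟧) (hε : ε = 1 ∨ ε = -1)
    (h : HasProd (fun i : ℕ => (1 + ε * X ^ (i+1) : ℤ⟦X⟧)) P) :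
    HasProd (fun i : ℕ => if m ∣ i + 1 then (1 + ε * X ^ (i+1) : ℤ⟦X⟧) else 1) (expand m hm P) := by
  have h1 := h.map (expand m hm : ℤ⟦X⟧ →ₐ[ℤ] ℤ⟦X⟧) (cont_expand_s7 m hm)
  have he : expand m hm ε = ε := by rcases hε with rfl | rfl <;> simp
  have hinj : Function.Injective (fun i : ℕ => m * (i+1) - 1) := by
    intro i j hij
    simp only at hij
    have hm1 : 1 ≤ m := Nat.pos_of_ne_zero hm
    have a1 : 1 ≤ m * (i+1) := Nat.mul_pos hm1 (by omega)
    have a2 : 1 ≤ m * (j+1) := Nat.mul_pos hm1 (by omega)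
    have := Nat.eq_of_mul_eq_mul_left hm1 (show m * (i+1) = m * (j+1) by omega)
    omega
  refine (hinj.hasProd_iff ?_).1 ?_
  · intro x hx
    rw [if_neg]
    rintro ⟨k, hk⟩
    apply hx
    have : k ≠ 0 := by rintro rfl; simp at hk
    refine ⟨k - 1, ?_⟩
    simp only
    rw [show k - 1 + 1 = k by omega]; omega
  · convert h1 using 1
    ext1 i
    have a1 : 1 ≤ m * (i+1) := Nat.mul_pos (Nat.pos_of_ne_zero hm) (by omega)
    simp only [Function.comp, show m * (i+1) - 1 + 1 = m * (i+1) by omega, dvd_mul_right, if_true,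
      map_add, map_one, map_mul, he, map_pow, expand_X, pow_mul]

theorem hasProd_PDm (m : ℕ) (hm : m ≠ 0) :
    HasProd (fun i : ℕ => if m ∣ i + 1 then (1 + X ^ (i+1) : ℤ⟦X⟧) else 1) (expand m hm PD) := by
  have := hasProd_expand m hm 1 PD (Or.inl rfl) (by simpa using hasProd_PD)
  simpa using this

theorem hasProd_PEm (m : ℕ) (hm : m ≠ 0) :
    HasProd (fun i : ℕ => if m ∣ i + 1 then (1 - X ^ (i+1) : ℤ⟦X⟧) else 1) (expand m hm PE) := by
  have := hasProd_expand m hm (-1) PE (Or.inr rfl) (by simpa [← sub_eq_add_neg] using hasProd_PE)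
  simpa [← sub_eq_add_neg] using this

theorem th_const : constantCoeff th = 1 := by
  rw [← coeff_zero_eq_constantCoeff_apply]; simp [th]

theorem PE_const : constantCoeff PE = 1 := by
  have h := hasProd_PE.map (constantCoeff (R := ℤ)) (WithPiTopology.continuous_constantCoeff ℤ)
  simpa [Function.comp_def] using h.tprod_eq.symm

theorem PD_const : constantCoeff PD = 1 := by
  have h := hasProd_PD.map (constantCoeff (R := ℤ)) (WithPiTopology.continuous_constantCoeff ℤ)
  simpa [Function.comp_def] using h.tprod_eq.symm

theorem ne_zero_of_const {f : ℤ⟦X⟧} (h : constantCoeff f = 1) : f ≠ 0 := by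
  rintro rfl; simp at h

theorem expand_PD_ne (m : ℕ) (hm : m ≠ 0) : expand m hm PD ≠ 0 :=
  ne_zero_of_const (by simp [PD_const])

theorem resc_const (f : ℤ⟦X⟧) : constantCoeff (rescale (-1) f) = constantCoeff f := by
  rw [← coeff_zero_eq_constantCoeff_apply, coeff_rescale]; simp

/-- φ(q)φ(-q) = φ(-q²)² -/
theorem theta_mul : rescale (-1) th * th = (expand 2 two_ne_zero th) ^ 2 := by
  have h1 := hasProd_PE.map (rescale (-1:ℤ)) cont_resc
  have h2 := hasProd_PD.map (rescale (-1:ℤ)) cont_resc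
  have e1 := ((hasProd_PE.mul h1).mul (hasProd_PDm 2 two_ne_zero)).mul (hasProd_PDm 2 two_ne_zero)
  have e2 := ((hasProd_PD.mul h2).mul (hasProd_PEm 2 two_ne_zero)).mul (hasProd_PEm 2 two_ne_zero)
  have hE : PE * rescale (-1) PE * expand 2 two_ne_zero PD * expand 2 two_ne_zero PD =
      PD * rescale (-1) PD * expand 2 two_ne_zero PE * expand 2 two_ne_zero PE := by
    refine e1.unique ?_
    convert e2 using 1
    ext1 i
    have hX : rescale (-1:ℤ) (X ^ (i+1)) = (-1) ^ (i+1) * X ^ (i+1) := by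
      rw [map_pow, rescale_X, mul_pow]; simp
    simp only [Function.comp, map_add, map_sub, map_one, hX]
    split_ifs with h
    · have : Even (i+1) := even_iff_two_dvd.2 h
      rw [this.neg_one_pow]; ring
    · have : Odd (i+1) := by rwa [← Nat.not_even_iff_odd, even_iff_two_dvd]
      rw [this.neg_one_pow]; ring
  rw [← gauss_s7] at hE
  simp only [map_mul] at hE
  have k1 := ne_zero_of_const PD_const
  have k2 : rescale (-1) PD ≠ 0 := ne_zero_of_const (by rw [resc_const, PD_const])
  have k3 := expand_PD_ne 2 two_ne_zero
  refine mul_left_cancel₀ (mul_ne_zero (mul_ne_zero k1 k2) (mul_ne_zero k3 k3)) ?_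
  linear_combination hE

theorem hasProd_reg (ℓ μ : ℕ) :
    HasProd (fun i : ℕ ↦ if (¬ ℓ ∣ i + 1 ∧ ¬ μ ∣ i + 1) then ∑' j : ℕ, X ^ ((i + 1) * j) else 1)
    (PowerSeries.mk fun n ↦ (regularCount ℓ μ n : ℤ)) := by
  convert! Nat.Partition.hasProd_powerSeriesMk_card_restricted ℤ
    (fun i => ¬ ℓ ∣ i ∧ ¬ μ ∣ i) using 1
  ext n
  simp only [coeff_mk, regularCount]
  rw [Fintype.card_subtype]
  rfl

theorem hasProd_dist (ℓ μ : ℕ) :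
    HasProd (fun i : ℕ ↦ if (¬ ℓ ∣ i + 1 ∧ ¬ μ ∣ i + 1) then 1 + X ^ (i + 1) else 1)
    (PowerSeries.mk fun n ↦ (regularDistinctCount ℓ μ n : ℤ)) := by
  convert! Nat.Partition.hasProd_genFun
    (fun i c ↦ if (¬ ℓ ∣ i ∧ ¬ μ ∣ i) ∧ c < 2 then (1 : ℤ) else 0) using 1
  · ext1 i
    rw [tsum_eq_single 0]
    · by_cases h : ¬ ℓ ∣ i + 1 ∧ ¬ μ ∣ i + 1
      · rw [if_pos h, if_pos ⟨h, by omega⟩]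
        simp only [zero_add, mul_one]
        congr 1
        exact (one_smul ℤ _).symm
      · rw [if_neg h, if_neg (fun h' => h h'.1)]
        exact (add_eq_left.2 (zero_smul ℤ _)).symm
    · intro b hb
      rw [if_neg (by omega)]
      exact zero_smul ℤ _
  · ext n
    rw [Nat.Partition.coeff_genFun]
    simp only [coeff_mk, regularDistinctCount, Finsupp.prod, prod_boole]
    rw [Fintype.card_subtype, card_filter, Nat.cast_sum]
    refine sum_congr rfl fun p _ => ?_
    push_cast
    congr 1
    simp only [Multiset.toFinsupp_support, Multiset.mem_toFinset, Multiset.toFinsupp_apply,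
      Multiset.nodup_iff_count_le_one, eq_iff_iff]
    constructor
    · rintro ⟨h1, h2⟩ i hi
      exact ⟨h2 i hi, by have := h1 i; omega⟩
    · intro h
      refine ⟨fun i => ?_, fun i hi => (h i hi).1⟩
      by_cases hi : i ∈ p.parts
      · have := (h i hi).2; omega
      · rw [Multiset.count_eq_zero_of_notMem hi]; omega

noncomputable def GG : ℤ⟦X⟧ := PowerSeries.mk fun n => (Rbar 4 9 n : ℤ)

theorem GG_eq : GG = (PowerSeries.mk fun n ↦ (regularCount 4 9 n : ℤ)) *
    (PowerSeries.mk fun n ↦ (regularDistinctCount 4 9 n : ℤ)) := by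
  ext n
  simp [GG, Rbar, coeff_mul]

theorem GG_rel : GG * th * expand 36 (by norm_num) th =
    expand 4 (by norm_num) th * expand 9 (by norm_num) th := by
  have h4 : (4:ℕ) ≠ 0 := by norm_num
  have h9 : (9:ℕ) ≠ 0 := by norm_num
  have h36 : (36:ℕ) ≠ 0 := by norm_num
  have e1 := (((((hasProd_reg 4 9).mul (hasProd_dist 4 9)).mul hasProd_PE).mul
    (hasProd_PDm 4 h4)).mul (hasProd_PDm 9 h9)).mul (hasProd_PEm 36 h36)
  have e2 := ((hasProd_PD.mul (hasProd_PEm 4 h4)).mul (hasProd_PEm 9 h9)).mul (hasProd_PDm 36 h36)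
  rw [← GG_eq] at e1
  have hE : GG * PE * expand 4 h4 PD * expand 9 h9 PD * expand 36 h36 PE =
      PD * expand 4 h4 PE * expand 9 h9 PE * expand 36 h36 PD := by
    refine e1.unique ?_
    convert e2 using 1
    ext1 i
    have h36' : 36 ∣ i + 1 ↔ 4 ∣ i + 1 ∧ 9 ∣ i + 1 := by omega
    have ht : (∑' j : ℕ, (X : ℤ⟦X⟧) ^ ((i + 1) * j)) * (1 - X ^ (i+1)) = 1 := by
      simp_rw [pow_mul]
      exact WithPiTopology.tsum_pow_mul_one_sub_of_constantCoeff_eq_zero (by simp)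
    simp only [h36']
    by_cases a4 : 4 ∣ i + 1 <;> by_cases a9 : 9 ∣ i + 1 <;>
      simp only [a4, a9, not_true, not_false_iff, and_true, and_false, true_and, if_true, if_false]
    · ring
    · ring
    · ring
    · linear_combination (1 + X ^ (i+1)) * ht
  rw [← gauss_s7] at hE
  simp only [map_mul] at hE
  have k1 := ne_zero_of_const PD_const
  refine mul_left_cancel₀ (mul_ne_zero (mul_ne_zero k1 (expand_PD_ne 4 h4))
    (mul_ne_zero (expand_PD_ne 9 h9) (expand_PD_ne 36 h36))) ?_
  linear_combination hE

abbrev n2 : (2:ℕ) ≠ 0 := by norm_num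
abbrev n3 : (3:ℕ) ≠ 0 := by norm_num
abbrev n4 : (4:ℕ) ≠ 0 := by norm_num
abbrev n9 : (9:ℕ) ≠ 0 := by norm_num

noncomputable def be : ℤ⟦X⟧ := PowerSeries.mk fun n => if IsSquare n ∧ Odd n then 1 else 0
noncomputable def et : ℤ⟦X⟧ := PowerSeries.mk fun n => if IsSquare n ∧ n ≠ 0 then (-1) ^ n else 0
noncomputable def aa : ℤ⟦X⟧ := expand 4 n4 (rescale (-1) th)

theorem two_C : (2 : ℤ⟦X⟧) = C 2 := by simp

theorem th_et : th = 1 + 2 * et := by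
  ext n
  rw [two_C, map_add, coeff_C_mul, coeff_one]
  simp only [th, et, coeff_mk]
  by_cases h : n = 0
  · simp [h]
  · by_cases h2 : IsSquare n <;> simp [h, h2]

theorem coeff_phi (n : ℕ) : coeff n (rescale (-1) th) =
    if IsSquare n then (if n = 0 then 1 else 2) else 0 := by
  rw [coeff_rescale]
  simp only [th, coeff_mk]
  by_cases h : n = 0
  · simp [h]
  · by_cases h2 : IsSquare n <;> simp [h, h2]
    rw [mul_left_comm, ← mul_pow]; simp

theorem even_sq {n : ℕ} (h : IsSquare n) (he : Even n) : 4 ∣ n := by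
  obtain ⟨t, rfl⟩ := h
  have : Even t := by rcases Nat.even_mul.1 he with h | h <;> exact h
  obtain ⟨s, rfl⟩ := this
  exact ⟨s * s, by ring⟩

theorem sq_div4 {n : ℕ} : IsSquare (4 * n) ↔ IsSquare n := by
  constructor
  · rintro ⟨t, ht⟩
    have : Even t := by
      have : Even (t * t) := by rw [← ht]; exact ⟨2 * n, by ring⟩
      rcases Nat.even_mul.1 this with h | h <;> exact h
    obtain ⟨s, rfl⟩ := this
    exact ⟨s, by nlinarith⟩
  · rintro ⟨t, rfl⟩
    exact ⟨2 * t, by ring⟩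

theorem phi_dec : rescale (-1) th = aa + 2 * be := by
  ext n
  rw [two_C, map_add, coeff_C_mul, coeff_phi, aa, coeff_expand]
  simp only [be, coeff_mk]
  by_cases h4 : 4 ∣ n
  · obtain ⟨k, rfl⟩ := h4
    have : ¬ Odd (4 * k) := by rw [Nat.not_odd_iff_even]; exact ⟨2 * k, by ring⟩
    rw [if_pos (dvd_mul_right 4 k), Nat.mul_div_cancel_left _ (by norm_num), coeff_phi]
    simp [this, sq_div4]
  · have hn : n ≠ 0 := by rintro rfl; simp at h4
    by_cases hs : IsSquare n
    · have : Odd n := by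
        rw [← Nat.not_even_iff_odd]; exact fun h => h4 (even_sq hs h)
      simp [h4, hn, hs, this]
    · simp [h4, hs]

theorem th_dec : th = aa - 2 * be := by
  have : th + rescale (-1) th = 2 * aa := by
    ext n
    have hth : coeff n th = if IsSquare n then (if n = 0 then 1 else 2 * (-1) ^ n) else 0 := by
      simp only [th, coeff_mk]
    rw [two_C, map_add, coeff_C_mul, coeff_phi, aa, coeff_expand, hth]
    by_cases h4 : 4 ∣ n
    · obtain ⟨k, rfl⟩ := h4
      have : Even (4 * k) := ⟨2 * k, by ring⟩
      rw [if_pos (dvd_mul_right 4 k), Nat.mul_div_cancel_left _ (by norm_num), coeff_phi]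
      simp only [this.neg_one_pow, sq_div4]
      simp only [mul_eq_zero, OfNat.ofNat_ne_zero, false_or]
      split_ifs <;> rfl
    · have hn : n ≠ 0 := by rintro rfl; simp at h4
      by_cases hs : IsSquare n
      · have : Odd n := by
          rw [← Nat.not_even_iff_odd]; exact fun h => h4 (even_sq hs h)
        simp [h4, hn, hs, this.neg_one_pow]
      · simp [h4, hs]
  rw [phi_dec] at this
  linear_combination this

/-- support in a residue class mod 4 -/
def Cl (k : ZMod 4) (f : ℤ⟦X⟧) : Prop := ∀ n, coeff n f ≠ 0 → (n : ZMod 4) = k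

theorem Cl.mul {i j : ZMod 4} {f g : ℤ⟦X⟧} (hf : Cl i f) (hg : Cl j g) : Cl (i + j) (f * g) := by
  intro n hn
  rw [coeff_mul] at hn
  obtain ⟨p, hp, hne⟩ := exists_ne_zero_of_sum_ne_zero hn
  rw [← mem_antidiagonal.1 hp, Nat.cast_add, hf _ (left_ne_zero_of_mul hne),
    hg _ (right_ne_zero_of_mul hne)]

theorem Cl.add {i : ZMod 4} {f g : ℤ⟦X⟧} (hf : Cl i f) (hg : Cl i g) : Cl i (f + g) := by
  intro n hn
  by_cases h : coeff n f = 0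
  · exact hg n (by simpa [h] using hn)
  · exact hf n h

theorem Cl.sub {i : ZMod 4} {f g : ℤ⟦X⟧} (hf : Cl i f) (hg : Cl i g) : Cl i (f - g) := by
  intro n hn
  by_cases h : coeff n f = 0
  · exact hg n (by simpa [h] using hn)
  · exact hf n h

theorem Cl_two : Cl 0 2 := by
  intro n hn
  rw [two_C, coeff_C] at hn
  have : n = 0 := by by_contra h; simp [h] at hn
  simp [this]

theorem Cl.expand {i : ZMod 4} {f : ℤ⟦X⟧} (hf : Cl i f) (m : ℕ) (hm : m ≠ 0) :
    Cl (m * i) (PowerSeries.expand m hm f) := by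
  intro n hn
  rw [coeff_expand] at hn
  by_cases h : m ∣ n
  · obtain ⟨k, rfl⟩ := h
    rw [if_pos (dvd_mul_right _ _), Nat.mul_div_cancel_left _ (Nat.pos_of_ne_zero hm)] at hn
    rw [Nat.cast_mul, hf k hn]
  · simp [h] at hn

theorem Cl_expand4 (f : ℤ⟦X⟧) : Cl 0 (PowerSeries.expand 4 n4 f) := by
  intro n hn
  rw [coeff_expand] at hn
  by_cases h : 4 ∣ n
  · exact (ZMod.natCast_eq_zero_iff n 4).2 h
  · simp [h] at hn

theorem Cl_be : Cl 1 be := by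
  intro n hn
  simp only [be, coeff_mk] at hn
  have h : IsSquare n ∧ Odd n := by by_contra h; simp [h] at hn
  obtain ⟨⟨t, rfl⟩, ho⟩ := h
  have : Odd t := (Nat.odd_mul.1 ho).1
  obtain ⟨s, rfl⟩ := this
  have h4 : (4 : ZMod 4) = 0 := rfl
  push_cast
  linear_combination (s * s + s) * h4

/-- 4-part -/
noncomputable def pr : ℤ⟦X⟧ →+ ℤ⟦X⟧ where
  toFun f := PowerSeries.mk fun n => if (n : ZMod 4) = 0 then coeff n f else 0
  map_zero' := by ext n; simp
  map_add' f g := by ext n; simp only [coeff_mk, map_add]; split_ifs <;> simp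

theorem coeff_pr (n : ℕ) (f : ℤ⟦X⟧) : coeff n (pr f) = if (n : ZMod 4) = 0 then coeff n f else 0 := by
  simp [pr]

theorem pr_of_Cl0 {f : ℤ⟦X⟧} (h : Cl 0 f) : pr f = f := by
  ext n
  rw [coeff_pr]
  split_ifs with hn
  · rfl
  · by_contra h'
    exact hn (h n (Ne.symm h'))

theorem pr_of_Cl {k : ZMod 4} {f : ℤ⟦X⟧} (h : Cl k f) (hk : k ≠ 0) : pr f = 0 := by
  ext n
  rw [coeff_pr, map_zero]
  split_ifs with hn
  · by_contra h'
    exact hk (by rw [← h n h', hn])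
  · rfl

theorem pr_mul (f g : ℤ⟦X⟧) (h : Cl 0 g) : pr (f * g) = pr f * g := by
  have h1 : Cl 0 (pr f) := by
    intro n hn
    rw [coeff_pr] at hn
    by_contra h; simp [h] at hn
  have h2 : pr ((f - pr f) * g) = 0 := by
    ext n
    rw [coeff_pr, map_zero]
    split_ifs with hn
    · rw [coeff_mul]
      refine sum_eq_zero fun p hp => ?_
      by_cases hg : coeff p.2 g = 0
      · rw [hg, mul_zero]
      · have e2 := h _ hg
        rw [← mem_antidiagonal.1 hp, Nat.cast_add, e2, add_zero] at hn
        rw [map_sub, coeff_pr, if_pos hn, sub_self, zero_mul]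
    · rfl
  have h3 : pr (pr f * g) = pr f * g := pr_of_Cl0 (by simpa using h1.mul h)
  rw [sub_mul, map_sub, h3, sub_eq_zero] at h2
  exact h2

noncomputable def bb : ℤ⟦X⟧ := 2 * be
noncomputable def cc : ℤ⟦X⟧ := expand 4 n4 th

theorem Cl_aa : Cl 0 aa := Cl_expand4 _
theorem Cl_bb : Cl 1 bb := by
  have := Cl_two.mul Cl_be
  rwa [zero_add] at this

theorem abc : (aa - bb) * (aa + bb) * (aa ^ 2 + bb ^ 2) = cc ^ 4 := by
  have h1 := theta_mul
  have h2 := congrArg (expand 2 n2) h1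
  simp only [map_mul, map_pow] at h2
  rw [← expand_mul, show expand (2 * 2) (mul_ne_zero n2 n2) th = cc from rfl] at h2
  rw [phi_dec, th_dec, map_add, map_sub] at h2
  rw [phi_dec, th_dec, map_sub] at h1
  change (expand 2 n2 aa + expand 2 n2 bb) * (expand 2 n2 aa - expand 2 n2 bb) = cc ^ 2 at h2
  change (aa + bb) * (aa - bb) = (expand 2 n2 aa - expand 2 n2 bb) ^ 2 at h1
  have cA : Cl 0 (expand 2 n2 aa) := by simpa using Cl_aa.expand 2 n2
  have cB : Cl 2 (expand 2 n2 bb) := by simpa using Cl_bb.expand 2 n2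
  generalize expand 2 n2 aa = A at *
  generalize expand 2 n2 bb = B at *
  have a2 : Cl 0 (aa * aa) := by simpa using Cl_aa.mul Cl_aa
  have b2 : Cl 2 (bb * bb) := Cl_bb.mul Cl_bb
  have A2 : Cl 0 (A * A + B * B) := by
    refine Cl.add (by simpa using cA.mul cA) (cB.mul cB)
  have AB : Cl 2 (2 * (A * B)) := by simpa using Cl_two.mul (cA.mul cB)
  have e : aa * aa - bb * bb = (A * A + B * B) - 2 * (A * B) := by linear_combination h1
  have e' := congrArg pr e
  rw [map_sub, map_sub, pr_of_Cl0 a2, pr_of_Cl0 A2, pr_of_Cl b2 (by decide),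
    pr_of_Cl AB (by decide)] at e'
  linear_combination (aa ^ 2 + bb ^ 2) * h1 + (A-B)^2 * (2 * e' - e)
    + ((A+B)*(A-B) + cc^2) * h2

theorem G0_rel : pr GG * (expand 9 n9 cc * cc ^ 3) =
    expand 9 n9 aa * aa ^ 3 - expand 9 n9 bb * bb ^ 3 := by
  have h := GG_rel
  have h36 : expand 36 (by norm_num) th = expand 9 n9 cc := by
    rw [cc, ← expand_mul]
  rw [h36] at h
  change GG * th * expand 9 n9 cc = cc * expand 9 n9 th at h
  have hth : th = aa - bb := th_dec
  rw [hth, map_sub] at h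
  have ccn : cc ≠ 0 := ne_zero_of_const (by simp [cc, th_const])
  have h' : GG * (expand 9 n9 cc * cc ^ 3) =
      (expand 9 n9 aa - expand 9 n9 bb) * ((aa + bb) * (aa ^ 2 + bb ^ 2)) := by
    refine mul_left_cancel₀ ccn ?_
    linear_combination (aa + bb) * (aa ^ 2 + bb ^ 2) * h - GG * expand 9 n9 cc * abc
  have cc0 : Cl 0 cc := Cl_expand4 _
  have c90 : Cl 0 (expand 9 n9 cc) := by simpa using cc0.expand 9 n9
  have a90 : Cl 0 (expand 9 n9 aa) := by simpa using Cl_aa.expand 9 n9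
  have b91 : Cl 1 (expand 9 n9 bb) := by
    have := Cl_bb.expand 9 n9
    exact this
  have a0 := Cl_aa
  have b1 := Cl_bb
  generalize expand 9 n9 cc = c9 at *
  generalize expand 9 n9 aa = a9 at *
  generalize expand 9 n9 bb = b9 at *
  have hc : Cl 0 (c9 * cc ^ 3) := by
    rw [pow_succ, sq]
    simpa using c90.mul ((cc0.mul cc0).mul cc0)
  have k0 : Cl 0 (a9 * (aa * aa * aa)) := by simpa using a90.mul ((a0.mul a0).mul a0)
  have k1 : Cl 1 (a9 * (aa * aa * bb)) := by simpa using a90.mul ((a0.mul a0).mul b1)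
  have k2 : Cl 2 (a9 * (aa * bb * bb)) := a90.mul ((a0.mul b1).mul b1)
  have k3 : Cl 3 (a9 * (bb * bb * bb)) := a90.mul ((b1.mul b1).mul b1)
  have l0 : Cl 1 (b9 * (aa * aa * aa)) := b91.mul ((a0.mul a0).mul a0)
  have l1 : Cl 2 (b9 * (aa * aa * bb)) := b91.mul ((a0.mul a0).mul b1)
  have l2 : Cl 3 (b9 * (aa * bb * bb)) := b91.mul ((a0.mul b1).mul b1)
  have l3 : Cl 0 (b9 * (bb * bb * bb)) := b91.mul ((b1.mul b1).mul b1)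
  have e : GG * (c9 * cc ^ 3) = a9 * (aa * aa * aa) + a9 * (aa * aa * bb) + a9 * (aa * bb * bb)
      + a9 * (bb * bb * bb) - b9 * (aa * aa * aa) - b9 * (aa * aa * bb) - b9 * (aa * bb * bb)
      - b9 * (bb * bb * bb) := by rw [h']; ring
  have e' := congrArg pr e
  rw [pr_mul _ _ hc] at e'
  simp only [map_sub, map_add] at e'
  rw [pr_of_Cl0 k0, pr_of_Cl k1 (by decide), pr_of_Cl k2 (by decide), pr_of_Cl k3 (by decide),
    pr_of_Cl l0 (by decide), pr_of_Cl l1 (by decide), pr_of_Cl l2 (by decide), pr_of_Cl0 l3] at e'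
  linear_combination e'

theorem frob3_s7 (f : ℤ⟦X⟧) : (3 : ℤ⟦X⟧) ∣ expand 3 n3 f - f ^ 3 := by
  have key : ∀ g : (ZMod 3)⟦X⟧, expand 3 n3 g = g ^ 3 := by
    intro g
    have h := MvPowerSeries.map_frobenius_expand (σ := Unit) (R := ZMod 3) 3 n3 (f := g)
    rw [ZMod.frobenius_zmod] at h
    rw [MvPowerSeries.map_id] at h
    exact h
  have h0 : PowerSeries.map (Int.castRingHom (ZMod 3)) (expand 3 n3 f - f ^ 3) = 0 := by
    rw [map_sub, map_expand, map_pow, key, sub_self]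
  have h3 : (3 : ℤ⟦X⟧) = C 3 := by simp
  refine ⟨PowerSeries.mk fun n => coeff n (expand 3 n3 f - f ^ 3) / 3, ?_⟩
  ext n
  rw [h3, coeff_C_mul, coeff_mk]
  have := congrArg (coeff n) h0
  rw [coeff_map, map_zero] at this
  rw [Int.mul_ediv_cancel']
  exact (ZMod.intCast_zmod_eq_zero_iff_dvd _ 3).1 this

theorem frob9 (f : ℤ⟦X⟧) : ∃ g, expand 9 n9 f = f ^ 9 + 3 * g := by
  obtain ⟨u, hu⟩ := frob3_s7 f
  obtain ⟨v, hv⟩ := frob3_s7 (expand 3 n3 f)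
  rw [← expand_mul] at hv
  change expand 9 n9 f - _ = _ at hv
  have hu' : expand 3 n3 f = f ^ 3 + 3 * u := by linear_combination hu
  rw [hu'] at hv
  exact ⟨v + (3 * f^6 * u + 9 * f^3 * u^2 + 9 * u^3), by linear_combination hv⟩

theorem unit_c : IsUnit (expand 9 n9 cc * cc ^ 3) := by
  rw [PowerSeries.isUnit_iff_constantCoeff]
  simp [cc, th_const]

theorem mod3 : (3 : ℤ⟦X⟧) ∣ pr GG - 1 := by
  rw [← unit_c.dvd_mul_right]
  obtain ⟨u, hu⟩ := frob9 aa
  obtain ⟨v, hv⟩ := frob9 bb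
  obtain ⟨w, hw⟩ := frob9 cc
  have h := G0_rel
  have h4 : aa ^ 4 - bb ^ 4 = cc ^ 4 := by rw [← abc]; ring
  have h12 : cc ^ 12 = aa^12 - bb^12 + 3 * (aa^4 * bb^8 - aa^8 * bb^4) := by
    rw [show cc ^ 12 = (cc^4)^3 by ring, ← h4]; ring
  rw [sub_mul, h, hu, hv, hw]
  refine ⟨u * aa^3 - v * bb^3 - w * cc^3 - (aa^4 * bb^8 - aa^8 * bb^4), ?_⟩
  linear_combination -h12

theorem mod8 : (8 : ℤ⟦X⟧) ∣ pr GG - (1 + 4 * expand 4 n4 be + 4 * expand 9 n9 (expand 4 n4 be)) := by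
  rw [← unit_c.dvd_mul_right]
  have h := G0_rel
  have ha : aa = cc + 4 * expand 4 n4 be := by
    have : rescale (-1) th = th + 4 * be := by
      rw [phi_dec]; linear_combination -th_dec
    rw [aa, this, cc, map_add, map_mul, map_ofNat]
  have hc : cc = 1 + 2 * expand 4 n4 et := by
    rw [cc]; conv_lhs => rw [th_et]
    rw [map_add, map_mul, map_one, map_ofNat]
  have ha9 : expand 9 n9 aa = expand 9 n9 cc + 4 * expand 9 n9 (expand 4 n4 be) := by
    conv_lhs => rw [ha]
    rw [map_add, map_mul, map_ofNat]
  have hc9 : expand 9 n9 cc = 1 + 2 * expand 9 n9 (expand 4 n4 et) := by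
    conv_lhs => rw [hc]
    rw [map_add, map_mul, map_one, map_ofNat]
  have hb9 : expand 9 n9 bb = 2 * expand 9 n9 be := by
    rw [bb, map_mul, map_ofNat]
  rw [sub_mul, h, ha9, hb9, bb]
  generalize expand 9 n9 (expand 4 n4 be) = o9 at *
  generalize expand 9 n9 (expand 4 n4 et) = e9 at *
  generalize expand 9 n9 cc = c9 at *
  generalize expand 9 n9 be = b9 at *
  generalize expand 4 n4 be = o at *
  generalize expand 4 n4 et = e at *
  generalize pr GG = G at *
  rw [ha]
  refine ⟨-o9 * cc^3 * e9 + c9 * cc^2 * o * (1 - e) + 6 * c9 * cc * o^2 + 8 * c9 * o^3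
    + 2 * o9 * (3 * cc^2 * o + 12 * cc * o^2 + 16 * o^3) - 2 * b9 * be^3, ?_⟩
  linear_combination (-4 * o9 * cc^3) * hc9 - 4 * c9 * cc^2 * o * hc

theorem dvd_coeff (k : ℤ) (f : ℤ⟦X⟧) (h : (C k : ℤ⟦X⟧) ∣ f) (n : ℕ) : k ∣ coeff n f := by
  obtain ⟨g, rfl⟩ := h
  rw [coeff_C_mul]; exact dvd_mul_right _ _

theorem main_nonsq (N : ℕ) (hN : ¬ IsSquare N) : 24 ∣ Rbar 4 9 (4 * N) := by
  have hN0 : N ≠ 0 := by rintro rfl; exact hN ⟨0, rfl⟩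
  have hG : coeff (4 * N) (pr GG) = (Rbar 4 9 (4 * N) : ℤ) := by
    rw [coeff_pr, if_pos ((ZMod.natCast_eq_zero_iff _ 4).2 (dvd_mul_right _ _))]
    simp [GG]
  have h1 : coeff (4 * N) (1 : ℤ⟦X⟧) = 0 := by rw [coeff_one, if_neg (by omega)]
  have h3 : (3:ℤ) ∣ (Rbar 4 9 (4 * N) : ℤ) := by
    have := dvd_coeff 3 _ (by simpa using mod3) (4 * N)
    rwa [map_sub, hG, h1, sub_zero] at this
  have hbe : coeff N be = 0 := by simp [be, hN]
  have ho : coeff (4 * N) (expand 4 n4 be) = 0 := by rw [coeff_expand_mul, hbe]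
  have ho9 : coeff (4 * N) (expand 9 n9 (expand 4 n4 be)) = 0 := by
    rw [coeff_expand]
    split_ifs with h
    · obtain ⟨k, rfl⟩ : 9 ∣ N := by omega
      rw [show 4 * (9 * k) / 9 = 4 * k by omega, coeff_expand_mul]
      have : ¬ IsSquare k := by
        rintro ⟨t, rfl⟩
        exact hN ⟨3 * t, by ring⟩
      simp [be, this]
    · rfl
  have h8 : (8:ℤ) ∣ (Rbar 4 9 (4 * N) : ℤ) := by
    have := dvd_coeff 8 _ (by simpa using mod8) (4 * N)
    have h4 : (4 : ℤ⟦X⟧) = C 4 := by simp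
    rw [h4] at this
    simpa only [map_sub, map_add, coeff_C_mul, hG, h1, ho, ho9, mul_zero, add_zero,
      sub_zero] using this
  omega

end aux

theorem Rbar_four_nine_nonresidue (k r : ℕ) (hk : 2 ≤ k) (hr1 : 1 ≤ r) (hr2 : r ≤ k - 1)
    (hnr : ¬ ∃ m : ℤ, m ^ 2 ≡ (r : ℤ) [ZMOD (k : ℤ)]) (n : ℕ) :
    Rbar 4 9 (4 * (k * n + r)) ≡ 0 [MOD 24] := by
  rw [Nat.modEq_zero_iff_dvd]
  apply main_nonsq
  rintro ⟨t, ht⟩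
  apply hnr
  refine ⟨t, ?_⟩
  have : (t : ℤ) ^ 2 = k * n + r := by
    rw [sq]; exact_mod_cast ht.symm
  rw [this]
  exact Int.modEq_iff_dvd.2 ⟨-n, by ring⟩
end

section
/- For all integers n ≥ 1 such that n is not the square of an odd integer, the number of (4,9)-regular overpartitions satisfies R̄_{4,9}(n) ≡ 0 (mod 4). -/
section Aux
open PowerSeries Finset
open scoped PowerSeries.WithPiTopology

lemma aux_gen {R : Type*} [CommRing R] [TopologicalSpace R] [T2Space R] [IsTopologicalRing R]
    (A : ℕ → Prop) [DecidablePred A] :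
    Nat.Partition.genFun (fun i _ => if A i then (1 : R) else 0) *
    Nat.Partition.genFun (fun i c => if c < 2 ∧ A i then (1 : R) else 0) =
    Nat.Partition.genFun (fun i _ => if A i then (2 : R) else 0) := by
  refine ((Nat.Partition.hasProd_genFun _).mul (Nat.Partition.hasProd_genFun _)).unique ?_
  convert! Nat.Partition.hasProd_genFun (fun i _ => if A i then (2 : R) else 0) using 1
  ext1 i
  by_cases hA : A (i + 1)
  · simp only [hA, if_true, and_true, one_smul]
    have hs := Nat.Partition.summable_genFun_term (R := R) (fun _ _ => 1) i
    simp only [one_smul] at hs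
    have h2 : ∑' j : ℕ, (if j + 1 < 2 then (1 : R) else 0) • (X : R⟦X⟧) ^ ((i + 1) * (j + 1))
        = X ^ (i + 1) := by
      rw [tsum_eq_single 0]
      · simp
      · intro b hb
        have : ¬ (b + 1 < 2) := by omega
        simp [this]
    have h3 : ∑' j : ℕ, (2 : R) • (X : R⟦X⟧) ^ ((i + 1) * (j + 1))
        = 2 * ∑' j : ℕ, (X : R⟦X⟧) ^ ((i + 1) * (j + 1)) := by
      rw [← hs.tsum_mul_left]
      refine tsum_congr fun j => ?_
      rw [two_smul, two_mul]
    have h4 : ∑' j : ℕ, (X : R⟦X⟧) ^ ((i + 1) * (j + 1))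
        = X ^ (i + 1) + (∑' j : ℕ, (X : R⟦X⟧) ^ ((i + 1) * (j + 1))) * X ^ (i + 1) := by
      conv_lhs => rw [hs.tsum_eq_zero_add]
      rw [← hs.tsum_mul_right]
      congr 1
      · simp
      · refine tsum_congr fun j => ?_
        ring
    rw [h2, h3]
    linear_combination -h4
  · simp [hA]

lemma aux_card1 {R : Type*} [CommRing R] (a : ℕ) :
    (regularCount 4 9 a : R) =
    (Nat.Partition.genFun (fun i _ => if (¬ 4 ∣ i ∧ ¬ 9 ∣ i) then (1 : R) else 0)).coeff a := by
  rw [Nat.Partition.coeff_genFun, regularCount, Fintype.card_subtype, card_filter]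
  simp_rw [Finsupp.prod, prod_boole]
  simp

lemma aux_card2 {R : Type*} [CommRing R] (a : ℕ) :
    (regularDistinctCount 4 9 a : R) =
    (Nat.Partition.genFun
      (fun i c => if c < 2 ∧ (¬ 4 ∣ i ∧ ¬ 9 ∣ i) then (1 : R) else 0)).coeff a := by
  rw [Nat.Partition.coeff_genFun, regularDistinctCount, Fintype.card_subtype, card_filter]
  simp_rw [Finsupp.prod, prod_boole]
  push_cast
  refine sum_congr rfl fun p _ => ?_
  congr 1
  rw [Multiset.nodup_iff_count_le_one]
  simp only [Multiset.toFinsupp_support, Multiset.mem_toFinset, Multiset.toFinsupp_apply, eq_iff_iff]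
  constructor
  · rintro ⟨h1, h2⟩ i hi
    exact ⟨by have := h1 i; omega, h2 i hi⟩
  · intro h
    refine ⟨fun i => ?_, fun i hi => (h i hi).2⟩
    by_cases hi : i ∈ p.parts
    · have := (h i hi).1; omega
    · simp [Multiset.count_eq_zero_of_notMem hi]

lemma aux_div (n : ℕ) (hn : 1 ≤ n)
    (h : ¬ ∃ m : ℕ, Odd m ∧ 0 < m ∧ n = m ^ 2) :
    ∑ d ∈ n.divisors.filter (fun i => ¬ 4 ∣ i ∧ ¬ 9 ∣ i), (2 : ZMod 4) = 0 := by
  have h22 : (2 : ZMod 4) + 2 = 0 := by decide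
  by_cases h2 : 2 ∣ n
  · refine sum_involution (fun d _ => if 2 ∣ d then d / 2 else 2 * d) (fun _ _ => h22) ?_ ?_ ?_
    · intro d hd _
      have := Nat.pos_of_mem_divisors (mem_filter.1 hd).1
      split_ifs <;> omega
    · intro d hd
      simp only [mem_filter, Nat.mem_divisors] at hd ⊢
      obtain ⟨⟨hd1, hd2⟩, hd3, hd4⟩ := hd
      split_ifs with hc
      · exact ⟨⟨(Nat.div_dvd_of_dvd hc).trans hd1, hd2⟩, by omega, by omega⟩
      · refine ⟨⟨Nat.Coprime.mul_dvd_of_dvd_of_dvd ?_ h2 hd1, hd2⟩, by omega, by omega⟩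
        exact (Nat.Prime.coprime_iff_not_dvd Nat.prime_two).2 hc
    · intro d hd
      simp only [mem_filter, Nat.mem_divisors] at hd
      split_ifs <;> omega
  by_cases h3 : 3 ∣ n
  · refine sum_involution (fun d _ => if 3 ∣ d then d / 3 else 3 * d) (fun _ _ => h22) ?_ ?_ ?_
    · intro d hd _
      have := Nat.pos_of_mem_divisors (mem_filter.1 hd).1
      split_ifs <;> omega
    · intro d hd
      simp only [mem_filter, Nat.mem_divisors] at hd ⊢
      obtain ⟨⟨hd1, hd2⟩, hd3, hd4⟩ := hd
      split_ifs with hc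
      · exact ⟨⟨(Nat.div_dvd_of_dvd hc).trans hd1, hd2⟩, by omega, by omega⟩
      · refine ⟨⟨Nat.Coprime.mul_dvd_of_dvd_of_dvd ?_ h3 hd1, hd2⟩, by omega, by omega⟩
        exact (Nat.Prime.coprime_iff_not_dvd Nat.prime_three).2 hc
    · intro d hd
      simp only [mem_filter, Nat.mem_divisors] at hd
      split_ifs <;> omega
  · refine sum_involution (fun d _ => n / d) (fun _ _ => h22) ?_ ?_ ?_
    · intro d hd _ he
      simp only [mem_filter, Nat.mem_divisors] at hd
      have hdn := Nat.div_mul_cancel hd.1.1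
      rw [he] at hdn
      refine h ⟨d, ?_, ?_, by rw [← hdn]; ring⟩
      · by_contra hc
        rw [Nat.not_odd_iff_even] at hc
        exact h2 (hc.two_dvd.trans hd.1.1)
      · exact Nat.pos_of_dvd_of_pos hd.1.1 hn
    · intro d hd
      simp only [mem_filter, Nat.mem_divisors] at hd ⊢
      have hdn := Nat.div_dvd_of_dvd hd.1.1
      refine ⟨⟨hdn, by omega⟩, fun h4 => ?_, fun h9 => ?_⟩
      · exact h2 ((by norm_num : 2 ∣ 4).trans (h4.trans hdn))
      · exact h3 ((by norm_num : 3 ∣ 9).trans (h9.trans hdn))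
    · intro d hd
      simp only [mem_filter, Nat.mem_divisors] at hd
      exact Nat.div_div_self hd.1.1 hd.1.2

lemma aux_sum (n : ℕ) (hn : 1 ≤ n) (A : ℕ → Prop) [DecidablePred A] :
    (Nat.Partition.genFun (fun i _ => if A i then (2 : ZMod 4) else 0)).coeff n
    = ∑ d ∈ n.divisors.filter A, (2 : ZMod 4) := by
  rw [Nat.Partition.coeff_genFun, sum_filter]
  symm
  refine sum_of_injOn
    (fun d => Nat.Partition.ofSums n (if d ∣ n then Multiset.replicate (n / d) d else {n})
      (by split_ifs with hd
          · simp [Nat.div_mul_cancel hd]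
          · simp)) ?_ (fun _ _ => by simp) ?_ ?_
  · intro a ha b hb hab
    simp only [mem_coe, Nat.mem_divisors] at ha hb
    have := congrArg Nat.Partition.parts hab
    simp only [Nat.Partition.ofSums, ha.1, hb.1, if_true] at this
    have hpa := Nat.pos_of_dvd_of_pos ha.1 hn
    have hpb := Nat.pos_of_dvd_of_pos hb.1 hn
    have hqa := Nat.div_pos (Nat.le_of_dvd hn ha.1) hpa
    have h1 : a ∈ Multiset.filter (fun x => x ≠ 0) (Multiset.replicate (n / a) a) := by
      rw [Multiset.mem_filter, Multiset.mem_replicate]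
      exact ⟨⟨hqa.ne', rfl⟩, hpa.ne'⟩
    rw [this] at h1
    exact Multiset.eq_of_mem_replicate (Multiset.mem_of_mem_filter h1)
  · intro p _ hp
    rw [Finsupp.prod]
    simp only [Multiset.toFinsupp_support]
    have hne : p.parts ≠ 0 := by
      intro h0
      have := p.parts_sum
      simp [h0] at this; omega
    obtain ⟨a, ha⟩ := Multiset.exists_mem_of_ne_zero hne
    have : ∃ b ∈ p.parts, b ≠ a := by
      by_contra! hc
      have hr := Multiset.eq_replicate_card.2 hc
      have hs := p.parts_sum
      rw [hr] at hs
      simp at hs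
      have hpa := p.parts_pos ha
      apply hp
      refine ⟨a, ?_, ?_⟩
      · simp only [mem_coe, Nat.mem_divisors]
        exact ⟨⟨_, (mul_comm _ _).trans hs |>.symm⟩, by omega⟩
      · have hdv : a ∣ n := ⟨_, (mul_comm _ _).trans hs |>.symm⟩
        ext1
        simp only [Nat.Partition.ofSums, hdv, if_true]
        have : n / a = p.parts.card := Nat.div_eq_of_eq_mul_left hpa hs.symm
        rw [this, ← hr, Multiset.filter_eq_self]
        intro x hx
        exact (p.parts_pos hx).ne'
    obtain ⟨b, hb, hba⟩ := this
    rw [← mul_prod_erase _ _ (Multiset.mem_toFinset.2 ha),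
      ← mul_prod_erase _ _ (mem_erase.2 ⟨hba, Multiset.mem_toFinset.2 hb⟩), ← mul_assoc]
    have : ((if A a then (2 : ZMod 4) else 0) * if A b then 2 else 0) = 0 := by
      split_ifs <;> decide
    rw [this, zero_mul]
  · intro d hd
    rw [Nat.mem_divisors] at hd
    have hpa := Nat.pos_of_dvd_of_pos hd.1 hn
    have hqa := Nat.div_pos (Nat.le_of_dvd hn hd.1) hpa
    rw [Finsupp.prod]
    have : (Multiset.filter (fun x => x ≠ 0) (Multiset.replicate (n / d) d)).toFinset = {d} := by
      ext x
      rw [Multiset.mem_toFinset, Multiset.mem_filter, Multiset.mem_replicate, mem_singleton]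
      constructor
      · rintro ⟨⟨_, h⟩, _⟩; exact h
      · rintro rfl; exact ⟨⟨hqa.ne', rfl⟩, hpa.ne'⟩
    simp only [Multiset.toFinsupp_support, Nat.Partition.ofSums, hd.1, if_true, this, prod_singleton]

end Aux

theorem Rbar_four_nine_mod_four (n : ℕ) (hn : 1 ≤ n)
    (h : ¬ ∃ m : ℕ, Odd m ∧ 0 < m ∧ n = m ^ 2) :
    Rbar 4 9 n ≡ 0 [MOD 4] := by
  rw [← ZMod.natCast_eq_natCast_iff, Rbar]
  push_cast
  simp_rw [aux_card1, aux_card2]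
  rw [← PowerSeries.coeff_mul]
  letI : TopologicalSpace (ZMod 4) := ⊥
  haveI : DiscreteTopology (ZMod 4) := ⟨rfl⟩
  rw [aux_gen, aux_sum n hn, aux_div n hn h]
end

section
/- For all integers n ≥ 0, ℓ ≥ 2, and k with 1 ≤ k ≤ ℓ, the number of (4,9)-regular overpartitions satisfies R̄_{4,9}(4ℓn + 4k) ≡ 0 (mod 6). -/
open PowerSeries PowerSeries.WithPiTopology
/-- generating function of a weight -/
noncomputable def gf (R : Type*) [CommRing R] {ι : Type} (w : ι → ℕ) : R⟦X⟧ :=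
  PowerSeries.mk fun n => (Nat.card {i // w i = n} : R)

theorem gf_congr (R : Type*) [CommRing R] {ι κ : Type} (w : ι → ℕ) (v : κ → ℕ) (f : ι → κ)
    (hf : Function.Bijective f) (h : ∀ i, v (f i) = w i) : gf R w = gf R v := by
  ext n
  simp only [gf, coeff_mk]
  congr 1
  apply Nat.card_congr
  exact (Equiv.ofBijective f hf).subtypeEquiv (fun a => by simp [h])

theorem gf_sum (R : Type*) [CommRing R] {ι κ : Type} (w : ι → ℕ) (v : κ → ℕ)
    (hw : ∀ n, Finite {i // w i = n}) (hv : ∀ n, Finite {i // v i = n}) :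
    gf R (Sum.elim w v) = gf R w + gf R v := by
  ext n
  simp only [gf, coeff_mk, map_add]
  have := hw n
  have := hv n
  rw [← Nat.cast_add, ← Nat.card_sum]
  congr 1
  apply Nat.card_congr
  exact (Equiv.subtypeSum).trans (Equiv.refl _)

theorem gf_mul (R : Type*) [CommRing R] {ι κ : Type} (w : ι → ℕ) (v : κ → ℕ)
    (hw : ∀ n, Finite {i // w i = n}) (hv : ∀ n, Finite {i // v i = n}) :
    gf R w * gf R v = gf R (fun p : ι × κ => w p.1 + v p.2) := by
  ext n
  rw [coeff_mul]
  simp only [gf, coeff_mk]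
  have e : {p : ι × κ // w p.1 + v p.2 = n} ≃
      Σ ab : Finset.HasAntidiagonal.antidiagonal n, {i // w i = ab.1.1} × {j // v j = ab.1.2} :=
    { toFun := fun p => ⟨⟨(w p.1.1, v p.1.2), by simpa using p.2⟩, ⟨p.1.1, rfl⟩, ⟨p.1.2, rfl⟩⟩
      invFun := fun q => ⟨(q.2.1.1, q.2.2.1), by
        have := q.1.2
        rw [Finset.HasAntidiagonal.mem_antidiagonal] at this
        simp [q.2.1.2, q.2.2.2, this]⟩
      left_inv := fun p => by simp
      right_inv := fun ⟨⟨⟨a, b⟩, h⟩, ⟨i, hi⟩, ⟨j, hj⟩⟩ => by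
        dsimp at hi hj
        subst hi hj
        rfl }
  rw [Nat.card_congr e, Nat.card_sigma]
  simp only [Nat.card_prod]
  rw [Finset.sum_coe_sort (Finset.HasAntidiagonal.antidiagonal n)
    (fun ab => Nat.card {i // w i = ab.1} * Nat.card {j // v j = ab.2})]
  push_cast
  rfl

theorem gf_hasSum (R : Type*) [CommRing R] [TopologicalSpace R] {ι : Type} (w : ι → ℕ)
    (hw : ∀ n, Finite {i // w i = n}) : HasSum (fun i => (X : R⟦X⟧) ^ w i) (gf R w) := by
  rw [hasSum_iff_hasSum_coeff]
  intro d
  have hfin : Set.Finite {i | w i = d} := hw d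
  have h := hasSum_sum_of_ne_finset_zero (f := fun i => coeff d ((X : R⟦X⟧) ^ w i))
    (s := hfin.toFinset) (L := SummationFilter.unconditional _) (by
      intro b hb
      simp only [Set.Finite.mem_toFinset, Set.mem_ofPred_eq] at hb
      rw [coeff_X_pow, if_neg (fun h => hb h.symm)])
  convert h using 1
  rw [Finset.sum_congr rfl (g := fun _ => (1 : R))]
  · simp only [gf, coeff_mk, Finset.sum_const, nsmul_eq_mul, mul_one]
    congr 1
    rw [← Set.ncard_eq_toFinset_card _ hfin]
    rfl
  · intro i hi
    simp only [Set.Finite.mem_toFinset, Set.mem_ofPred_eq] at hi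
    simp [coeff_X_pow, hi]

theorem gf_coeff_zero (R : Type*) [CommRing R] {ι : Type} (w : ι → ℕ) (n : ℕ)
    (h : ∀ i, w i ≠ n) : coeff n (gf R w) = 0 := by
  have : IsEmpty {i // w i = n} := ⟨fun i => h i.1 i.2⟩
  simp [gf]

/-- squares -/
def wE (c : ℕ) (x : ℤ) : ℕ := c * (x ^ 2).toNat
/-- odd squares -/
def wO (c : ℕ) (x : ℤ) : ℕ := c * ((2 * x + 1) ^ 2).toNat

theorem wE_cast (c : ℕ) (x : ℤ) : (wE c x : ℤ) = c * x ^ 2 := by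
  simp [wE, Int.toNat_of_nonneg (sq_nonneg x)]
theorem wO_cast (c : ℕ) (x : ℤ) : (wO c x : ℤ) = c * (2 * x + 1) ^ 2 := by
  simp [wO, Int.toNat_of_nonneg (sq_nonneg (2 * x + 1))]

theorem wE_fin (c : ℕ) (hc : 0 < c) (n : ℕ) : Finite {x // wE c x = n} := by
  apply Set.Finite.subset (Set.finite_Icc (-(n : ℤ)) n)
  intro x hx
  have h : (wE c x : ℤ) = n := by exact_mod_cast hx
  rw [wE_cast] at h
  have hc' : (1 : ℤ) ≤ c := by exact_mod_cast hc
  have h1 : x ^ 2 ≤ n := by nlinarith [sq_nonneg x]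
  constructor <;> nlinarith [sq_nonneg (x + 1), sq_nonneg (x-1), Int.le_self_sq x, Int.le_self_sq (-x)]

theorem wO_fin (c : ℕ) (hc : 0 < c) (n : ℕ) : Finite {x // wO c x = n} := by
  have := wE_fin c hc n
  apply Finite.of_injective (β := {x // wE c x = n}) (fun x => ⟨2 * x.1 + 1, x.2⟩)
  intro x y h
  have h' := congrArg Subtype.val h
  dsimp at h'
  exact Subtype.ext (by omega)

section
variable (R : Type*) [CommRing R]

theorem theta1 (c : ℕ) (hc : 0 < c) : gf R (wO c) ^ 2 = 2 * (gf R (wE (8 * c)) * gf R (wO (2 * c))) := by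
  have h1 := fun n => wO_fin c hc n
  have h2 := fun n => wE_fin (8 * c) (by omega) n
  have h3 := fun n => wO_fin (2 * c) (by omega) n
  have hp : ∀ n, Finite {i : ℤ × ℤ // wE (8 * c) i.1 + wO (2 * c) i.2 = n} := by
    intro n
    have a : Set.Finite (⋃ m ∈ Set.Iic n, {x | wE (8 * c) x = m}) :=
      (Set.finite_Iic n).biUnion fun m _ => h2 m
    have b : Set.Finite (⋃ m ∈ Set.Iic n, {x | wO (2 * c) x = m}) :=
      (Set.finite_Iic n).biUnion fun m _ => h3 m
    apply Set.Finite.subset (a.prod b)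
    rintro ⟨x, y⟩ (h : _ + _ = _)
    simp only [Set.mem_prod, Set.mem_iUnion, Set.mem_ofPred_eq, Set.mem_Iic]
    exact ⟨⟨_, by dsimp at h; omega, rfl⟩, ⟨_, by dsimp at h; omega, rfl⟩⟩
  rw [pow_two, gf_mul R _ _ h1 h1, gf_mul R _ _ h2 h3, two_mul, ← gf_sum R _ _ hp hp]
  symm
  apply gf_congr R _ _ (Sum.elim (fun p : ℤ × ℤ => (p.2 + p.1, p.2 - p.1))
    (fun p : ℤ × ℤ => (p.1 + p.2, p.1 - p.2 - 1)))
  · constructor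
    · rintro (⟨a, b⟩ | ⟨a, b⟩) (⟨a', b'⟩ | ⟨a', b'⟩) h <;>
        simp only [Sum.elim_inl, Sum.elim_inr, Prod.mk.injEq, Sum.inl.injEq, Sum.inr.injEq, reduceCtorEq] at h ⊢ <;>
        omega
    · rintro ⟨x, y⟩
      rcases Int.even_or_odd' (x - y) with ⟨s, h | h⟩
      · exact ⟨Sum.inl (s, x - s), by simp; omega⟩
      · exact ⟨Sum.inr (x - s, s), by simp; omega⟩
  · rintro (⟨a, b⟩ | ⟨a, b⟩) <;> simp only [Sum.elim_inl, Sum.elim_inr] <;> zify <;>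
      simp only [wO_cast, wE_cast] <;> push_cast <;> ring

theorem theta2 : gf R (wE 16) ^ 2 + gf R (wO 4) ^ 2 = gf R (wE 8) ^ 2 := by
  have h1 := fun n => wE_fin 16 (by omega) n
  have h2 := fun n => wO_fin 4 (by omega) n
  have h3 := fun n => wE_fin 8 (by omega) n
  have hp : ∀ n, Finite {i : ℤ × ℤ // wE 16 i.1 + wE 16 i.2 = n} := by
    intro n
    have a : Set.Finite (⋃ m ∈ Set.Iic n, {x | wE 16 x = m}) :=
      (Set.finite_Iic n).biUnion fun m _ => h1 m
    apply Set.Finite.subset (a.prod a)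
    rintro ⟨x, y⟩ (h : _ + _ = _)
    simp only [Set.mem_prod, Set.mem_iUnion, Set.mem_ofPred_eq, Set.mem_Iic]
    exact ⟨⟨_, by dsimp at h; omega, rfl⟩, ⟨_, by dsimp at h; omega, rfl⟩⟩
  have hq : ∀ n, Finite {i : ℤ × ℤ // wO 4 i.1 + wO 4 i.2 = n} := by
    intro n
    have a : Set.Finite (⋃ m ∈ Set.Iic n, {x | wO 4 x = m}) :=
      (Set.finite_Iic n).biUnion fun m _ => h2 m
    apply Set.Finite.subset (a.prod a)
    rintro ⟨x, y⟩ (h : _ + _ = _)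
    simp only [Set.mem_prod, Set.mem_iUnion, Set.mem_ofPred_eq, Set.mem_Iic]
    exact ⟨⟨_, by dsimp at h; omega, rfl⟩, ⟨_, by dsimp at h; omega, rfl⟩⟩
  rw [pow_two, pow_two, pow_two, gf_mul R _ _ h1 h1, gf_mul R _ _ h2 h2, gf_mul R _ _ h3 h3,
    ← gf_sum R _ _ hp hq]
  apply gf_congr R _ _ (Sum.elim (fun p : ℤ × ℤ => (p.1 + p.2, p.1 - p.2))
    (fun p : ℤ × ℤ => (p.1 + p.2 + 1, p.1 - p.2)))
  · constructor
    · rintro (⟨a, b⟩ | ⟨a, b⟩) (⟨a', b'⟩ | ⟨a', b'⟩) h <;>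
        simp only [Sum.elim_inl, Sum.elim_inr, Prod.mk.injEq, Sum.inl.injEq, Sum.inr.injEq, reduceCtorEq] at h ⊢ <;>
        omega
    · rintro ⟨x, y⟩
      rcases Int.even_or_odd' (x + y) with ⟨s, h | h⟩
      · exact ⟨Sum.inl (s, x - s), by simp; omega⟩
      · exact ⟨Sum.inr (s, x - s - 1), by simp; omega⟩
  · rintro (⟨a, b⟩ | ⟨a, b⟩) <;> simp only [Sum.elim_inl, Sum.elim_inr] <;> zify <;>
      simp only [wO_cast, wE_cast] <;> push_cast <;> ring

theorem theta3 : gf R (wE 4) = gf R (wE 16) + gf R (wO 4) := by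
  have h1 := fun n => wE_fin 16 (by omega) n
  have h2 := fun n => wO_fin 4 (by omega) n
  rw [← gf_sum R _ _ h1 h2]
  symm
  apply gf_congr R _ _ (Sum.elim (fun p : ℤ => 2 * p) (fun p : ℤ => 2 * p + 1))
  · constructor
    · rintro (a | a) (a' | a') h <;>
        simp only [Sum.elim_inl, Sum.elim_inr, Sum.inl.injEq, Sum.inr.injEq, reduceCtorEq] at h ⊢ <;>
        omega
    · intro x
      rcases Int.even_or_odd' x with ⟨s, h | h⟩
      · exact ⟨Sum.inl s, by simp; omega⟩
      · exact ⟨Sum.inr s, by simp; omega⟩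
  · rintro (a | a) <;> simp only [Sum.elim_inl, Sum.elim_inr] <;> zify <;>
      simp only [wO_cast, wE_cast] <;> push_cast <;> ring

theorem jacobi : gf R (wE 4) ^ 4 - gf R (wO 1) ^ 4 = (gf R (wE 16) - gf R (wO 4)) ^ 4 := by
  have h1 := theta1 R 1 (by omega)
  have h2 := theta1 R 2 (by omega)
  have h3 := theta2 R
  rw [theta3]
  norm_num at h1 h2
  have : gf R (wO 1) ^ 4 = 4 * gf R (wE 8) ^ 2 * gf R (wO 2) ^ 2 := by
    rw [show (4:ℕ) = 2 * 2 from rfl, pow_mul, h1]; ring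
  rw [this, h2, ← h3]
  ring
end

section
variable {R : Type*} [CommRing R]
/-- P -/
def bB (x : R) (n s : ℕ) : R := (∏ i ∈ Finset.Ico s n, (1 - x ^ (i + 1))) * ∏ i ∈ Finset.range s, (1 + x ^ i)

theorem bB_succ (x : R) (n s : ℕ) (h : s ≤ n) : bB x (n + 1) s = (1 - x ^ (n + 1)) * bB x n s := by
  rw [bB, bB, Finset.prod_Ico_succ_top h]; ring

theorem bB_rec (x : R) (n s : ℕ) (h : s < n) : bB x n (s + 1) * (1 - x ^ (s + 1)) = bB x n s * (1 + x ^ s) := by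
  rw [bB, bB, Finset.prod_eq_prod_Ico_succ_bot h, Finset.prod_range_succ]; ring

theorem bB_sum (x : R) (m t : ℕ) (ht : t ≤ m) :
    ∑ s ∈ Finset.range (t + 1), (-1) ^ s * (x ^ (s * (m + 2)) * bB x (m + 1) s
      - (1 + x ^ (m + 1)) * (x ^ (s * (m + 1)) * bB x m s))
    = - ((-1) ^ t * x ^ (t * (m + 1)) * bB x m t * x ^ (m + 1) * (1 + x ^ t)) := by
  induction t with
  | zero =>
    simp [bB_succ x m 0 (by omega)]; ring
  | succ t ih =>
    rw [Finset.sum_range_succ, ih (by omega), bB_succ x m (t + 1) ht]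
    have := bB_rec x m t (by omega)
    linear_combination (-1) ^ t * x ^ (t * (m + 1)) * x ^ (m + 1) * this

/-- partial theta -/
def sS (x : R) (n : ℕ) : R := ∑ j ∈ Finset.range (n + 1), 2 * (-1) ^ j * x ^ (j ^ 2) - 1

theorem shanks (x : R) (n : ℕ) : (∏ i ∈ Finset.range n, (1 + x ^ (i + 1))) * sS x n =
    ∑ s ∈ Finset.range (n + 1), (-1) ^ s * (x ^ (s * (n + 1)) * bB x n s) := by
  induction n with
  | zero => simp [sS, bB]; norm_num
  | succ m ih =>
    have h := bB_sum x m m le_rfl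
    have e : ∀ s, (-1) ^ s * (x ^ (s * (m + 2)) * bB x (m + 1) s
      - (1 + x ^ (m + 1)) * (x ^ (s * (m + 1)) * bB x m s)) =
      (-1) ^ s * (x ^ (s * (m + 2)) * bB x (m + 1) s)
      - (1 + x ^ (m + 1)) * ((-1) ^ s * (x ^ (s * (m + 1)) * bB x m s)) := by intro s; ring
    simp only [e] at h
    rw [Finset.sum_sub_distrib, ← Finset.mul_sum, ← ih] at h
    rw [Finset.sum_range_succ _ (m + 1), Finset.prod_range_succ]
    have hS : sS x (m + 1) = sS x m + 2 * (-1) ^ (m + 1) * x ^ ((m + 1) ^ 2) := by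
      simp only [sS]; rw [Finset.sum_range_succ _ (m + 1)]; ring
    have hR : ∀ m, ∏ i ∈ Finset.range (m + 1), (1 + x ^ i) = 2 * ∏ i ∈ Finset.range m, (1 + x ^ (i + 1)) := by
      intro m
      rw [Finset.prod_range_succ']; norm_num; ring
    have h1 : bB x (m + 1) (m + 1) = 2 * ∏ i ∈ Finset.range m, (1 + x ^ (i + 1)) := by
      rw [bB, hR]; simp
    have h2 : bB x m m * (1 + x ^ m) = 2 * ∏ i ∈ Finset.range m, (1 + x ^ (i + 1)) := by
      rw [← hR, Finset.prod_range_succ, bB]; simp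
    rw [h1, hS]
    linear_combination - h + (-1) ^ m * x ^ (m * (m + 1)) * x ^ (m + 1) * h2
end

section
variable {R : Type*} [CommRing R] [TopologicalSpace R]

theorem mult_of_dvd (u : ℕ → R⟦X⟧) (h : ∀ i, X ^ (i + 1) ∣ u i) : Multipliable (fun i => 1 + u i) := by
  apply multipliable_one_add_of_tendsto_order_atTop_nhds_top
  refine ENat.tendsto_nhds_top_iff_natCast_lt.mpr (fun n ↦ Filter.eventually_atTop.mpr ⟨n, ?_⟩)
  intro m hm
  have h1 : ((m + 1 : ℕ) : ℕ∞) ≤ (u m).order := by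
    exact nat_le_order _ _ (X_pow_dvd_iff.mp (h m))
  refine lt_of_lt_of_le ?_ h1
  norm_cast
  omega

theorem mult_ite (e : R⟦X⟧) (p : ℕ → Prop) [DecidablePred p] :
    Multipliable (fun i => if p (i + 1) then 1 + e * X ^ (i + 1) else 1) := by
  have := mult_of_dvd (fun i => if p (i + 1) then e * X ^ (i + 1) else 0) (by
    intro i; split_ifs
    · exact Dvd.intro_left _ rfl
    · simp)
  convert this using 2
  split_ifs <;> simp

theorem mult_c (e : R⟦X⟧) (c : ℕ) (hc : 0 < c) :
    Multipliable (fun i => 1 + e * X ^ (c * (i + 1))) := by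
  apply mult_of_dvd
  intro i
  apply Dvd.dvd.mul_left
  apply pow_dvd_pow
  nlinarith

/-- product over all multiples of c -/
noncomputable def pP (e : R⟦X⟧) (c : ℕ) : R⟦X⟧ := ∏' i, (1 + e * X ^ (c * (i + 1)))
/-- product over all i with p -/
noncomputable def pR (e : R⟦X⟧) (p : ℕ → Prop) [DecidablePred p] : R⟦X⟧ :=
  ∏' i, if p (i + 1) then 1 + e * X ^ (i + 1) else 1

variable [IsTopologicalRing R] [T2Space R]

theorem pR_dvd (e : R⟦X⟧) (c : ℕ) (hc : 0 < c) : pR e (c ∣ ·) = pP e c := by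
  have hinj : Function.Injective (fun j : ℕ => c * (j + 1) - 1) := by
    intro a b h
    have ha : 0 < c * (a + 1) := by positivity
    have hb : 0 < c * (b + 1) := by positivity
    have : c * (a + 1) = c * (b + 1) := by dsimp at h; omega
    have := Nat.eq_of_mul_eq_mul_left hc this
    omega
  have h := (mult_ite e (c ∣ ·)).hasProd
  rw [← hinj.hasProd_iff] at h
  · have h2 := h.tprod_eq
    rw [pR, ← h2, pP]
    apply tprod_congr
    intro j
    have ha : c * (j + 1) - 1 + 1 = c * (j + 1) := by
      have : 0 < c * (j + 1) := by positivity
      omega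
    simp [ha]
  · intro x hx
    rw [if_neg]
    rintro ⟨k, hk⟩
    apply hx
    refine ⟨k - 1, ?_⟩
    have : k ≠ 0 := by rintro rfl; simp at hk
    have h3 : k - 1 + 1 = k := by omega
    simp only [h3, ← hk]
    omega

theorem pR_rel (e : R⟦X⟧) : pR e (fun i => ¬ 4 ∣ i ∧ ¬ 9 ∣ i) * pP e 4 * pP e 9 = pP e 1 * pP e 36 := by
  have h1 : pP e 1 = pR e (fun _ => True) := by simp [pP, pR]
  rw [h1, ← pR_dvd e 4 (by omega), ← pR_dvd e 9 (by omega), ← pR_dvd e 36 (by omega)]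
  simp only [pR]
  have m (p : ℕ → Prop) [DecidablePred p] := mult_ite e p
  have m1 := m (fun i => ¬ 4 ∣ i ∧ ¬ 9 ∣ i)
  have m2 := m (4 ∣ ·)
  have m3 := m (9 ∣ ·)
  have m4 := m (fun _ => True)
  have m5 := m (36 ∣ ·)
  rw [← m1.tprod_mul m2, ← (m1.mul m2).tprod_mul m3, ← m4.tprod_mul m5]
  apply tprod_congr
  intro i
  have : 36 ∣ i + 1 ↔ 4 ∣ i + 1 ∧ 9 ∣ i + 1 := by omega
  by_cases h4 : 4 ∣ i + 1 <;> by_cases h9 : 9 ∣ i + 1 <;> simp [this, h4, h9]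

theorem pP_ne [Nontrivial R] (e : R⟦X⟧) (c : ℕ) (hc : 0 < c) : pP e c ≠ 0 := by
  intro h
  have h0 := congrArg constantCoeff h
  rw [pP, (mult_c e c hc).map_tprod _ (continuous_constantCoeff R)] at h0
  simp [hc.ne'] at h0

theorem pP_frob [CharP R 3] (e : R⟦X⟧) (he : e ^ 3 = e) (c : ℕ) (hc : 0 < c) :
    pP e (9 * c) = pP e c ^ 9 := by
  have : Fact (Nat.Prime 3) := ⟨Nat.prime_three⟩
  have : CharP R⟦X⟧ 3 := by
    apply charP_of_injective_ringHom (f := (C : R →+* R⟦X⟧)) C_injective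
  rw [pP, pP, ← (mult_c e c hc).tprod_pow]
  apply tprod_congr
  intro i
  rw [show 9 = 3 ^ 2 from rfl, add_pow_char_pow, one_pow, mul_pow, ← pow_mul]
  rw [show e ^ 3 ^ 2 = (e ^ 3) ^ 3 by ring, he, he]
  ring_nf

theorem gauss_s9 (c : ℕ) (hc : 0 < c) :
    pP (1 : R⟦X⟧) c * (gf R (wE (4 * c)) - gf R (wO c)) = pP (-1 : R⟦X⟧) c := by
  have hE := gf_hasSum R _ (wE_fin (4 * c) (by omega))
  have hO := (gf_hasSum R _ (wO_fin c hc)).neg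
  have hs : HasSum (fun j : ℤ => (-1 : R⟦X⟧) ^ j.natAbs * X ^ (c * j.natAbs ^ 2))
      (gf R (wE (4 * c)) - gf R (wO c)) := by
    have i2 : Function.Injective (fun x : ℤ => 2 * x) := fun a b h => by dsimp at h; omega
    have i3 : Function.Injective (fun x : ℤ => 2 * x + 1) := fun a b h => by dsimp at h; omega
    have e1 : ∀ x : ℤ, (-1 : R⟦X⟧) ^ (2 * x).natAbs * X ^ (c * (2 * x).natAbs ^ 2) =
        X ^ wE (4 * c) x := by
      intro x
      have h1 : Even (2 * x).natAbs := by rw [Int.natAbs_even]; simp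
      have h2 : c * (2 * x).natAbs ^ 2 = wE (4 * c) x := by
        zify; rw [wE_cast, sq_abs]; push_cast; ring
      rw [h1.neg_one_pow, h2, one_mul]
    have e2 : ∀ x : ℤ, (-1 : R⟦X⟧) ^ (2 * x + 1).natAbs * X ^ (c * (2 * x + 1).natAbs ^ 2) =
        - X ^ wO c x := by
      intro x
      have h1 : Odd (2 * x + 1).natAbs := by rw [Int.natAbs_odd]; simp
      have h2 : c * (2 * x + 1).natAbs ^ 2 = wO c x := by
        zify; rw [wO_cast, sq_abs]
      rw [h1.neg_one_pow, h2, neg_one_mul]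
    rw [sub_eq_add_neg]
    refine HasSum.add_isCompl Int.isCompl_even_odd ?_ ?_
    · have : {n : ℤ | Even n} = Set.range (fun x : ℤ => 2 * x) := by
        ext x; simp [even_iff_exists_two_mul, eq_comm]
      rw [this]
      refine (i2.hasSum_range_iff (f := fun j : ℤ => (-1 : R⟦X⟧) ^ j.natAbs * X ^ (c * j.natAbs ^ 2))).2 ?_
      simpa only [Function.comp_def, e1] using hE
    · have : {n : ℤ | Odd n} = Set.range (fun x : ℤ => 2 * x + 1) := by
        ext x; simp [Odd, eq_comm]
      rw [this]
      refine (i3.hasSum_range_iff (f := fun j : ℤ => (-1 : R⟦X⟧) ^ j.natAbs * X ^ (c * j.natAbs ^ 2))).2 ?_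
      simpa only [Function.comp_def, e2] using hO
  have hn := hs.nat_add_neg
  have hS : Filter.Tendsto (fun n => sS ((X : R⟦X⟧) ^ c) n) Filter.atTop
      (nhds (gf R (wE (4 * c)) - gf R (wO c))) := by
    have := ((hn.tendsto_sum_nat).comp (Filter.tendsto_add_atTop_nat 1)).sub_const 1
    convert this using 2
    · simp only [sS, Function.comp]
      congr 1
      apply Finset.sum_congr rfl
      intro j _
      simp [← pow_mul]; ring
    · simp
  have hQ := (mult_c (1 : R⟦X⟧) c hc).hasProd.tendsto_prod_nat
  have hP := (mult_c (-1 : R⟦X⟧) c hc).hasProd.tendsto_prod_nat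
  have hl := (hQ.mul hS).sub hP
  have h0 : Filter.Tendsto (fun n => (∏ i ∈ Finset.range n, (1 + (1 : R⟦X⟧) * X ^ (c * (i + 1)))) *
      sS ((X : R⟦X⟧) ^ c) n - ∏ i ∈ Finset.range n, (1 + (-1 : R⟦X⟧) * X ^ (c * (i + 1)))) Filter.atTop
      (nhds 0) := by
    rw [tendsto_iff_coeff_tendsto]
    intro d
    apply tendsto_atTop_of_eventually_const (i₀ := d)
    intro n hn
    have h1 := shanks ((X : R⟦X⟧) ^ c) n
    rw [Finset.sum_range_succ'] at h1
    simp only [← pow_mul] at h1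
    simp only [one_mul]
    rw [h1]
    have h2 : bB ((X : R⟦X⟧) ^ c) n 0 = ∏ i ∈ Finset.range n, (1 + (-1 : R⟦X⟧) * X ^ (c * (i + 1))) := by
      simp [bB, ← pow_mul, sub_eq_add_neg]
    rw [h2]
    simp only [pow_zero, zero_mul, mul_zero, one_mul, add_sub_cancel_right]
    rw [map_sum, map_zero]
    apply Finset.sum_eq_zero
    intro s _
    refine X_pow_dvd_iff.mp (?_ : X ^ (d + 1) ∣ _) d (by omega)
    apply Dvd.dvd.mul_left
    apply Dvd.dvd.mul_right
    apply pow_dvd_pow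
    calc d + 1 ≤ 1 * (1 * (n + 1)) := by omega
      _ ≤ _ := by gcongr <;> omega
  exact sub_eq_zero.mp (tendsto_nhds_unique hl h0)
end

section
variable {R : Type*} [CommRing R]

/-- supported on exponents congruent to r mod 4 -/
def Sup (r : ℕ) (f : R⟦X⟧) : Prop := ∀ n, n % 4 ≠ r % 4 → coeff n f = 0

theorem Sup.mul {r s : ℕ} {f g : R⟦X⟧} (hf : Sup r f) (hg : Sup s g) : Sup (r + s) (f * g) := by
  intro n hn
  rw [coeff_mul]
  apply Finset.sum_eq_zero
  intro p hp
  have := Finset.HasAntidiagonal.mem_antidiagonal.mp hp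
  by_cases h : p.1 % 4 = r % 4
  · rw [hg p.2 (by omega), mul_zero]
  · rw [hf p.1 h, zero_mul]

theorem Sup.pow {r : ℕ} {f : R⟦X⟧} (hf : Sup r f) (k : ℕ) : Sup (k * r) (f ^ k) := by
  induction k with
  | zero =>
    intro n hn
    rw [pow_zero, coeff_one, if_neg]
    rintro rfl; simp at hn
  | succ k ih => rw [pow_succ, Nat.succ_mul]; exact ih.mul hf

/-- 4-section -/
noncomputable def sec (f : R⟦X⟧) : R⟦X⟧ := PowerSeries.mk fun n => if 4 ∣ n then coeff n f else 0

theorem sec_add (f g : R⟦X⟧) : sec (f + g) = sec f + sec g := by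
  ext n; simp only [sec, coeff_mk, map_add]; split_ifs <;> simp

theorem sec_zero {r : ℕ} {f : R⟦X⟧} (hf : Sup r f) (hr : r % 4 ≠ 0) : sec f = 0 := by
  ext n; simp only [sec, coeff_mk, map_zero]
  split_ifs
  · exact hf n (by omega)
  · rfl

theorem sec_self {f : R⟦X⟧} (hf : Sup 0 f) : sec f = f := by
  ext n; simp only [sec, coeff_mk]
  split_ifs
  · rfl
  · rw [hf n (by omega)]

theorem sec_mul (f : R⟦X⟧) {g : R⟦X⟧} (hg : Sup 0 g) : sec (f * g) = sec f * g := by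
  ext n
  simp only [sec, coeff_mk]
  rw [coeff_mul, coeff_mul]
  simp only [coeff_mk]
  split_ifs with h
  · apply Finset.sum_congr rfl
    intro p hp
    have := Finset.HasAntidiagonal.mem_antidiagonal.mp hp
    split_ifs with h4
    · rfl
    · rw [hg p.2 (by omega)]; simp
  · symm
    apply Finset.sum_eq_zero
    intro p hp
    have := Finset.HasAntidiagonal.mem_antidiagonal.mp hp
    split_ifs with h4
    · rw [hg p.2 (by omega)]; simp
    · simp

theorem sup_wE (c : ℕ) : Sup 0 (gf R (wE (4 * c))) := by
  intro n hn
  apply gf_coeff_zero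
  intro i h
  rw [wE, mul_assoc] at h
  omega

theorem sup_wO4 : Sup 0 (gf R (wO 4)) := by
  intro n hn
  apply gf_coeff_zero
  intro i h
  rw [wO] at h
  omega

theorem sup_wO1 : Sup 1 (gf R (wO 1)) := by
  intro n hn
  apply gf_coeff_zero
  intro i h
  have h2 : (wO 1 i : ℤ) = n := by exact_mod_cast h
  rw [wO_cast] at h2
  have : (n : ℤ) = 4 * (i ^ 2 + i) + 1 := by rw [← h2]; push_cast; ring
  omega

theorem sec_phi [CharP R 3] : sec ((gf R (wE 4) - gf R (wO 1)) ^ 8) =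
    (gf R (wE 16) - gf R (wO 4)) ^ 8 := by
  have h3 : (3 : R⟦X⟧) = 0 := by
    have : ((3 : ℕ) : R) = 0 := CharP.cast_eq_zero R 3
    have h := congrArg (C : R →+* R⟦X⟧) this
    rw [map_natCast, map_zero] at h
    exact_mod_cast h
  have ha : Sup 0 (gf R (wE 4)) := sup_wE 1
  have hb : Sup 1 (gf R (wO 1)) := sup_wO1
  have hab : ∀ i j, Sup j (gf R (wE 4) ^ i * gf R (wO 1) ^ j) := by
    intro i j
    simpa using (ha.pow i).mul (hb.pow j)
  have hj := jacobi R
  generalize gf R (wE 4) = a at *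
  generalize gf R (wO 1) = b at *
  have hc : ∀ (k : ℤ) i j, j % 4 ≠ 0 → sec ((k : R⟦X⟧) * (a ^ i * b ^ j)) = 0 := by
    intro k i j h
    apply sec_zero (r := j) _ h
    intro n hn
    rw [← zsmul_eq_mul, map_zsmul, hab i j n hn, smul_zero]
  have e : (a - b) ^ 8 = (a ^ 4 - b ^ 4) ^ 2 + ((-8 : ℤ) : R⟦X⟧) * (a ^ 7 * b ^ 1)
    + ((28 : ℤ) : R⟦X⟧) * (a ^ 6 * b ^ 2) + ((-56 : ℤ) : R⟦X⟧) * (a ^ 5 * b ^ 3)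
    + ((-56 : ℤ) : R⟦X⟧) * (a ^ 3 * b ^ 5) + ((28 : ℤ) : R⟦X⟧) * (a ^ 2 * b ^ 6)
    + ((-8 : ℤ) : R⟦X⟧) * (a ^ 1 * b ^ 7) := by
    push_cast
    linear_combination 24 * a ^ 4 * b ^ 4 * h3
  rw [e]
  simp only [sec_add]
  rw [hc _ 7 1 (by omega), hc _ 6 2 (by omega), hc _ 5 3 (by omega), hc _ 3 5 (by omega),
    hc _ 2 6 (by omega), hc _ 1 7 (by omega), hj]
  simp only [add_zero]
  rw [← pow_mul]
  apply sec_self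
  have hd : Sup 0 (gf R (wE 16) - gf R (wO 4)) := by
    intro n hn
    rw [map_sub, sup_wE 4 n hn, sup_wO4 n hn, sub_zero]
  exact hd.pow 8
end

section
variable (R : Type*) [CommRing R] [TopologicalSpace R] [IsTopologicalRing R] [T2Space R]

/-- generating function of Rbar 4 9 -/
noncomputable def gG : R⟦X⟧ := PowerSeries.mk fun n => (Rbar 4 9 n : R)

theorem gA_mul : (PowerSeries.mk fun n => (regularCount 4 9 n : R)) *
    pR (-1) (fun i => ¬ 4 ∣ i ∧ ¬ 9 ∣ i) = 1 := by
  have h := Nat.Partition.hasProd_powerSeriesMk_card_restricted R (fun i => ¬ 4 ∣ i ∧ ¬ 9 ∣ i)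
  have h2 := (mult_ite (-1 : R⟦X⟧) (fun i => ¬ 4 ∣ i ∧ ¬ 9 ∣ i)).hasProd
  have h3 := h.mul h2
  have e : (PowerSeries.mk fun n => (regularCount 4 9 n : R)) =
    (PowerSeries.mk fun n => ((Nat.Partition.restricted n (fun i => ¬ 4 ∣ i ∧ ¬ 9 ∣ i)).card : R)) := by
    ext n
    simp only [coeff_mk, regularCount, Nat.Partition.restricted, Fintype.card_subtype]
  rw [e, pR]
  rw [← h3.tprod_eq]
  refine (tprod_congr ?_).trans tprod_one
  intro i
  split_ifs
  · simp_rw [pow_mul]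
    rw [neg_one_mul, ← sub_eq_add_neg]
    exact tsum_pow_mul_one_sub_of_constantCoeff_eq_zero (by simp)
  · simp

theorem gD_eq : (PowerSeries.mk fun n => (regularDistinctCount 4 9 n : R)) =
    pR 1 (fun i => ¬ 4 ∣ i ∧ ¬ 9 ∣ i) := by
  have h := Nat.Partition.hasProd_genFun
    (fun i c => if c = 1 ∧ ¬ 4 ∣ i ∧ ¬ 9 ∣ i then (1 : R) else 0)
  have e : (PowerSeries.mk fun n => (regularDistinctCount 4 9 n : R)) = Nat.Partition.genFun
    (fun i c => if c = 1 ∧ ¬ 4 ∣ i ∧ ¬ 9 ∣ i then (1 : R) else 0) := by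
    ext n
    simp only [coeff_mk, Nat.Partition.coeff_genFun, regularDistinctCount, Fintype.card_subtype,
      Finsupp.prod, Finset.prod_boole, Finset.card_filter]
    push_cast
    apply Finset.sum_congr rfl
    intro p _
    congr 1
    simp only [Multiset.toFinsupp_support, Multiset.mem_toFinset, Multiset.toFinsupp_apply, eq_iff_iff]
    constructor
    · rintro ⟨h1, h2⟩ i hi
      exact ⟨Multiset.count_eq_one_of_mem h1 hi, h2 i hi⟩
    · intro h
      refine ⟨?_, fun i hi => (h i hi).2⟩
      rw [Multiset.nodup_iff_count_le_one]
      intro i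
      by_cases hi : i ∈ p.parts
      · exact (h i hi).1.le
      · simp [hi]
  rw [e, pR, ← h.tprod_eq]
  apply tprod_congr
  intro i
  rw [tsum_eq_single 0]
  · split_ifs <;> simp_all
  · intro j hj
    simp [hj]

theorem gG_eq : gG R = (PowerSeries.mk fun n => (regularCount 4 9 n : R)) *
    pR 1 (fun i => ¬ 4 ∣ i ∧ ¬ 9 ∣ i) := by
  rw [← gD_eq]
  ext n
  simp [gG, coeff_mul, Rbar]

end

theorem gG_two : gG (ZMod 2) = 1 := by
  have h : (-1 : (ZMod 2)⟦X⟧) = 1 := by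
    have : (-1 : ZMod 2) = 1 := by decide
    have h := congrArg (C : ZMod 2 →+* (ZMod 2)⟦X⟧) this
    rwa [map_neg, map_one] at h
  have := gA_mul (ZMod 2)
  rw [h] at this
  rw [gG_eq, this]

theorem gG_three : sec (gG (ZMod 3)) = 1 := by
  have : Fact (Nat.Prime 3) := ⟨Nat.prime_three⟩
  have hA := gA_mul (ZMod 3)
  have hG := gG_eq (ZMod 3)
  have r1 := pR_rel (1 : (ZMod 3)⟦X⟧)
  have r2 := pR_rel (-1 : (ZMod 3)⟦X⟧)
  have f1 := pP_frob (1 : (ZMod 3)⟦X⟧) (by ring) 1 (by omega)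
  have f2 := pP_frob (1 : (ZMod 3)⟦X⟧) (by ring) 4 (by omega)
  have f3 := pP_frob (-1 : (ZMod 3)⟦X⟧) (by ring) 1 (by omega)
  have f4 := pP_frob (-1 : (ZMod 3)⟦X⟧) (by ring) 4 (by omega)
  have g1 := gauss_s9 (R := ZMod 3) 1 (by omega)
  have g4 := gauss_s9 (R := ZMod 3) 4 (by omega)
  have n1 := pP_ne (1 : (ZMod 3)⟦X⟧) 1 (by omega)
  have n2 := pP_ne (1 : (ZMod 3)⟦X⟧) 4 (by omega)
  have n3 := pP_ne (-1 : (ZMod 3)⟦X⟧) 1 (by omega)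
  have n4 := pP_ne (-1 : (ZMod 3)⟦X⟧) 4 (by omega)
  have hs := sec_phi (R := ZMod 3)
  have hd : Sup 0 ((gf (ZMod 3) (wE 16) - gf (ZMod 3) (wO 4)) ^ 8) := by
    refine Sup.pow (r := 0) ?_ 8
    intro n hn
    rw [map_sub, sup_wE 4 n hn, sup_wO4 n hn, sub_zero]
  norm_num only at f1 f2 f3 f4 g1 g4
  rw [f1, f2] at r1
  rw [f3, f4] at r2
  generalize gf (ZMod 3) (wE 16) - gf (ZMod 3) (wO 4) = Φ4 at *
  generalize gf (ZMod 3) (wE 4) - gf (ZMod 3) (wO 1) = Φ at *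
  generalize pR (-1 : (ZMod 3)⟦X⟧) (fun i => ¬ 4 ∣ i ∧ ¬ 9 ∣ i) = U at *
  generalize pR (1 : (ZMod 3)⟦X⟧) (fun i => ¬ 4 ∣ i ∧ ¬ 9 ∣ i) = D at *
  generalize pP (1 : (ZMod 3)⟦X⟧) 1 = Q1 at *
  generalize pP (1 : (ZMod 3)⟦X⟧) 4 = Q4 at *
  generalize pP (-1 : (ZMod 3)⟦X⟧) 1 = P1 at *
  generalize pP (-1 : (ZMod 3)⟦X⟧) 4 = P4 at *
  have s1 : D * Q1 ^ 8 = Q4 ^ 8 := by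
    apply mul_left_cancel₀ (mul_ne_zero n1 n2)
    linear_combination r1
  have s2 : U * P1 ^ 8 = P4 ^ 8 := by
    apply mul_left_cancel₀ (mul_ne_zero n3 n4)
    linear_combination r2
  have hGU : gG (ZMod 3) * U = D := by
    rw [hG]; linear_combination D * hA
  have key : Φ ^ 8 = gG (ZMod 3) * Φ4 ^ 8 := by
    apply mul_left_cancel₀ (pow_ne_zero 8 n2)
    calc Q4 ^ 8 * Φ ^ 8 = D * (Q1 * Φ) ^ 8 := by rw [← s1]; ring
      _ = gG (ZMod 3) * (U * P1 ^ 8) := by rw [g1, ← hGU]; ring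
      _ = Q4 ^ 8 * (gG (ZMod 3) * Φ4 ^ 8) := by rw [s2, ← g4]; ring
  have hne : Φ4 ^ 8 ≠ 0 := by
    apply pow_ne_zero
    rintro rfl
    rw [mul_zero] at g4
    exact n4 g4.symm
  rw [key, sec_mul _ hd] at hs
  exact mul_right_cancel₀ hne (by rw [hs, one_mul])

theorem Rbar_four_nine_conjecture (n ℓ k : ℕ) (hℓ : 2 ≤ ℓ) (hk1 : 1 ≤ k) (hk2 : k ≤ ℓ) :
    Rbar 4 9 (4 * ℓ * n + 4 * k) ≡ 0 [MOD 6] := by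
  have hN : 4 * ℓ * n + 4 * k = 4 * (ℓ * n + k) := by ring
  rw [hN]
  generalize hm : ℓ * n + k = m
  have hm0 : m ≠ 0 := by
    have := Nat.zero_le (ℓ * n); omega
  have h2 : 2 ∣ Rbar 4 9 (4 * m) := by
    have h := congrArg (coeff (4 * m)) gG_two
    rw [gG, coeff_mk, coeff_one, if_neg (by omega)] at h
    exact (ZMod.natCast_eq_zero_iff _ _).mp h
  have h3 : 3 ∣ Rbar 4 9 (4 * m) := by
    have h := congrArg (coeff (4 * m)) gG_three
    rw [sec, coeff_mk, if_pos (by omega), gG, coeff_mk, coeff_one, if_neg (by omega)] at h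
    exact (ZMod.natCast_eq_zero_iff _ _).mp h
  rw [Nat.modEq_zero_iff_dvd]
  omega
end
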